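/- Consider the 2D Euler equation in vorticity form ∂_tω + (Δ^{-1}∇^⊥ω)·∇ω = 0 with smooth, compactly supported initial data g satisfying: (i) g is odd in x₁ and odd in x₂, and g(x₁,x₂) ≥ 0 when x₁ ≥ 0, x₂ ≥ 0; (ii) B := ∫_{ℝ²} g(x) x₁x₂/|x|⁴ dx > 0. Let φ(t,·) denote the flow map of the velocity u = Δ^{-1}∇^⊥ω. Then for all t ≥ 0, ∫₀ᵗ ‖Dφ(s,·)‖_∞^{-4} ds ≤ (π/(4B)) log(1 + (4B/π)t); in particular max_{0≤s≤t} ‖Dφ(s,·)‖_∞ ≥ ((4B/π)· t/log(1+(4B/π)t))^{1/4} for every t > 0. -/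

import Mathlib

/-!
Everything is governed by the strain rate at the origin,
`a(t) = (1/π) ∫ ω(t,y) y₁y₂/|y|⁴ dy`, which equals `B/π` at time `0`.

*Symmetry.* Reflecting a solution in a coordinate axis and changing the sign of its vorticity gives
another solution with the same initial datum. By uniqueness (`euler_unique`) the vorticity remains
odd in each variable and the flow commutes with the reflections (`flow_reflIso`). Hence the origin
is a fixed point, both axes and each quadrant are invariant under the flow, and the stretching
factor `p(t) = ∂₁φ₁(t,0)` satisfies `p' = a p` (`hasDerivAt_vel_axis`, `hasDerivAt_stretch`).

*Lower bound for the strain.* Let `M` bound the entries of `Dφ(t,·)`. The velocity is divergence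
free (`exists_hasFDerivAt_vel`), so `det Dφ = 1` and the inverse of the flow satisfies the same
bound on the diagonal entries of its Jacobian matrix. As the axes are preserved, both `φᵢ(t,x)/xᵢ`
and its reciprocal are at most `M`, whence `φ₁φ₂/|φ|⁴ ≥ M⁻⁴ x₁x₂/|x|⁴` in the first quadrant.
Transport of the vorticity and the change of variables `y = φ(t,x)` give `a(t) ≥ (B/π) M⁻⁴`
(`strain_lower_bound`).

*Conclusion.* Let `E(t) = exp((4B/π) ∫₀ᵗ M⁻⁴)`. The equation for `p` gives `E ≤ p⁴ ≤ M⁴`, and hence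
`E' = (4B/π) M⁻⁴ E ≤ 4B/π`, so that `E(t) ≤ 1 + (4B/π) t` (`integral_deformation_le`). For a
constant bound `M` the integral is `t M⁻⁴`, which is the second claim.

No decay of the vorticity at positive times is assumed, and it has to be derived before symmetry and
uniqueness are available. The velocity is differentiable and divergence free whether or not the
vorticity decays, so `det Dφ = 1` always holds. Together with the bound on `Dφ` this makes the
inverse Jacobian matrices uniformly bounded, hence `φ(t,·)` onto (`flow_surjective`). Consequently
the vorticity is supported in the image of the support of `g`, which is compact.
-/

open MeasureTheory Real Set

noncomputable section

/-- The 2D Biot–Savart kernel `K(x) = (1/(2π)) x^⊥/|x|²`. -/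
def biotSavartK (x : EuclideanSpace ℝ (Fin 2)) : EuclideanSpace ℝ (Fin 2) :=
  (1 / (2 * Real.pi * ‖x‖ ^ 2)) •
    ((-(x 1)) • EuclideanSpace.single 0 (1:ℝ) + (x 0) • EuclideanSpace.single 1 (1:ℝ))

/-- Reflection in the first coordinate, `(x₁,x₂) ↦ (−x₁,x₂)`. -/
def refl1 (x : EuclideanSpace ℝ (Fin 2)) : EuclideanSpace ℝ (Fin 2) :=
  EuclideanSpace.single 0 (-(x 0)) + EuclideanSpace.single 1 (x 1)

/-- Reflection in the second coordinate, `(x₁,x₂) ↦ (x₁,−x₂)`. -/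
def refl2 (x : EuclideanSpace ℝ (Fin 2)) : EuclideanSpace ℝ (Fin 2) :=
  EuclideanSpace.single 0 (x 0) + EuclideanSpace.single 1 (-(x 1))

section

open Filter Topology

/-! ### The Biot–Savart kernel -/

/-- The Euclidean plane. -/
abbrev Plane := EuclideanSpace ℝ (Fin 2)

lemma plane_norm_sq (x : Plane) : ‖x‖ ^ 2 = x 0 ^ 2 + x 1 ^ 2 := by
  rw [EuclideanSpace.real_norm_sq_eq, Fin.sum_univ_two]

lemma kernel_zero (x : Plane) : biotSavartK x 0 = -(x 1) / (2 * π * ‖x‖ ^ 2) := by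
  simp [biotSavartK]; ring

lemma kernel_one (x : Plane) : biotSavartK x 1 = x 0 / (2 * π * ‖x‖ ^ 2) := by
  simp [biotSavartK]; ring

lemma abs_coord_le (x : Plane) (i : Fin 2) : |x i| ≤ ‖x‖ := PiLp.norm_apply_le x i

lemma plane_eq_of_coord {x y : Plane} (h0 : x 0 = y 0) (h1 : x 1 = y 1) : x = y := by
  ext i; fin_cases i <;> assumption

lemma norm_kernel (x : Plane) : ‖biotSavartK x‖ = 1 / (2 * π * ‖x‖) := by
  rcases eq_or_ne x 0 with rfl | hx
  · simp [biotSavartK]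
  have hx' : 0 < ‖x‖ := norm_pos_iff.2 hx
  have h2 : ‖biotSavartK x‖ ^ 2 = (1 / (2 * π * ‖x‖)) ^ 2 := by
    rw [plane_norm_sq, kernel_zero, kernel_one]
    field_simp
    rw [plane_norm_sq]; ring
  exact (pow_left_inj₀ (norm_nonneg _) (by positivity) two_ne_zero).1 h2

/-- The kernel is, up to the factor `1/(2π)` and a rotation, inversion in the unit circle; hence
the exact formula for how it distorts distances. -/
lemma norm_kernel_sub {x y : Plane} (hx : x ≠ 0) (hy : y ≠ 0) :
    ‖biotSavartK x - biotSavartK y‖ = ‖x - y‖ / (2 * π * ‖x‖ * ‖y‖) := by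
  have hx' : 0 < ‖x‖ := norm_pos_iff.2 hx
  have hy' : 0 < ‖y‖ := norm_pos_iff.2 hy
  have h2 : ‖biotSavartK x - biotSavartK y‖ ^ 2 = (‖x - y‖ / (2 * π * ‖x‖ * ‖y‖)) ^ 2 := by
    rw [plane_norm_sq, div_pow, plane_norm_sq (x - y)]
    simp only [PiLp.sub_apply]
    rw [kernel_zero, kernel_one, kernel_zero, kernel_one]
    have e1 := plane_norm_sq x
    have e2 := plane_norm_sq y
    rw [show (2 * π * ‖x‖ * ‖y‖) ^ 2 = 4 * π ^ 2 * ‖x‖ ^ 2 * ‖y‖ ^ 2 by ring]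
    have p1 : 0 < ‖x‖ ^ 2 := by positivity
    have p2 : 0 < ‖y‖ ^ 2 := by positivity
    set a := ‖x‖ ^ 2
    set b := ‖y‖ ^ 2
    field_simp
    rw [e1, e2]
    ring
  exact (pow_left_inj₀ (norm_nonneg _) (by positivity) two_ne_zero).1 h2

lemma measurable_kernel : Measurable biotSavartK := by
  unfold biotSavartK
  fun_prop

lemma locallyIntegrable_kernel : LocallyIntegrable biotSavartK (volume : Measure Plane) := by
  rw [locallyIntegrable_iff]
  intro k hk
  obtain ⟨r, hr⟩ := hk.isBounded.subset_ball 0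
  refine IntegrableOn.mono_set ?_ hr
  have h1 : IntegrableOn (fun x : Plane => 1 / (2 * π * ‖x‖)) (Metric.ball 0 r) := by
    rw [integrableOn_fun_norm_addHaar (μ := (volume : Measure Plane))
      (f := fun s => 1 / (2 * π * s))]
    have h2 : IntegrableOn (fun _ : ℝ => 1 / (2 * π)) (Ioo 0 r) :=
      integrableOn_const (by simp)
    refine h2.congr_fun (fun s hs => ?_) measurableSet_Ioo
    have := hs.1
    simp only [finrank_euclideanSpace, Fintype.card_fin, smul_eq_mul]
    field_simp
    norm_num
  refine Integrable.mono' h1 measurable_kernel.aestronglyMeasurable ?_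
  filter_upwards with x
  rw [norm_kernel]

/-! ### The velocity induced by a vorticity -/

/-- The velocity field `K * f` induced by a vorticity `f`. -/
def vel (f : Plane → ℝ) (x : Plane) : Plane := ∫ y, f y • biotSavartK (x - y)

/-- Trace of an endomorphism of the plane, as a continuous linear functional. -/
def tr2 : (Plane →L[ℝ] Plane) →L[ℝ] ℝ :=
  (EuclideanSpace.proj 0 : Plane →L[ℝ] ℝ).comp
      (ContinuousLinearMap.apply ℝ Plane (EuclideanSpace.single 0 (1 : ℝ) : Plane)) +
    (EuclideanSpace.proj 1 : Plane →L[ℝ] ℝ).comp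
      (ContinuousLinearMap.apply ℝ Plane (EuclideanSpace.single 1 (1 : ℝ) : Plane))

lemma tr2_apply (A : Plane →L[ℝ] Plane) :
    tr2 A = A (EuclideanSpace.single 0 1) 0 + A (EuclideanSpace.single 1 1) 1 := by
  simp [tr2]

/-- Regularised Biot–Savart kernel `x^⊥ / (2π(|x|² + ε))`; it is smooth and divergence free for
`ε > 0`, and equals the Biot–Savart kernel for `ε = 0`. -/
def regK (ε : ℝ) (x : Plane) : Plane :=
  (1 / (2 * π * (‖x‖ ^ 2 + ε))) •
    ((-(x 1)) • EuclideanSpace.single 0 (1:ℝ) + (x 0) • EuclideanSpace.single 1 (1:ℝ))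

lemma regK_zero : regK 0 = biotSavartK := by
  ext x : 1; simp [regK, biotSavartK]

lemma regK_coord_zero (ε : ℝ) (x : Plane) : regK ε x 0 = -(x 1) / (2 * π * (‖x‖ ^ 2 + ε)) := by
  rw [div_eq_inv_mul]; simp [regK]

lemma regK_coord_one (ε : ℝ) (x : Plane) : regK ε x 1 = x 0 / (2 * π * (‖x‖ ^ 2 + ε)) := by
  rw [div_eq_inv_mul]; simp [regK]

lemma differentiableAt_regK {ε : ℝ} {x : Plane} (h : ‖x‖ ^ 2 + ε ≠ 0) :
    DifferentiableAt ℝ (regK ε) x := by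
  have h' : 2 * π * (‖x‖ ^ 2 + ε) ≠ 0 := mul_ne_zero (by positivity) h
  have hn : DifferentiableAt ℝ (fun x : Plane => ‖x‖ ^ 2) x :=
    DifferentiableAt.norm_sq ℝ differentiableAt_id
  unfold regK
  simp only [one_div]
  have hi : DifferentiableAt ℝ (fun x : Plane => (2 * π * (‖x‖ ^ 2 + ε))⁻¹) x :=
    (differentiableAt_inv h').comp x ((hn.add_const ε).const_mul (2 * π))
  exact hi.smul (by fun_prop)

lemma tr2_fderiv_regK {ε : ℝ} {x : Plane} (h : ‖x‖ ^ 2 + ε ≠ 0) :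
    tr2 (fderiv ℝ (regK ε) x) = 0 := by
  have h' : 2 * π * (x 0 ^ 2 + x 1 ^ 2 + ε) ≠ 0 := by
    rw [plane_norm_sq] at h
    exact mul_ne_zero (by positivity) h
  have hK := (differentiableAt_regK h).hasFDerivAt
  have hp : ∀ i, HasFDerivAt (fun y : Plane => y i) (EuclideanSpace.proj i : Plane →L[ℝ] ℝ) x :=
    fun i => (EuclideanSpace.proj i : Plane →L[ℝ] ℝ).hasFDerivAt
  have hq : HasFDerivAt (fun y : Plane => (2 * π * (y 0 ^ 2 + y 1 ^ 2 + ε))⁻¹) _ x :=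
    (hasDerivAt_inv h').comp_hasFDerivAt x
      (((((hp 0).pow 2).add ((hp 1).pow 2)).add_const ε).const_mul (2 * π))
  have e0 := ((EuclideanSpace.proj 0 : Plane →L[ℝ] ℝ).hasFDerivAt.comp x hK).unique
    ((((hp 1).neg.mul hq)).congr_of_eventuallyEq (Eventually.of_forall fun y => by
      simp [regK_coord_zero, plane_norm_sq, div_eq_mul_inv]))
  have e1 := ((EuclideanSpace.proj 1 : Plane →L[ℝ] ℝ).hasFDerivAt.comp x hK).unique
    ((((hp 0).mul hq)).congr_of_eventuallyEq (Eventually.of_forall fun y => by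
      simp [regK_coord_one, plane_norm_sq, div_eq_mul_inv]))
  have e0' := DFunLike.congr_fun e0 (EuclideanSpace.single 0 1)
  have e1' := DFunLike.congr_fun e1 (EuclideanSpace.single 1 1)
  simp at e0' e1'
  rw [tr2_apply, e0', e1']
  ring

lemma norm_regK_le {ε : ℝ} (hε : 0 ≤ ε) (x : Plane) : ‖regK ε x‖ ≤ ‖biotSavartK x‖ := by
  rcases eq_or_ne x 0 with rfl | hx
  · simp [regK]
  have hx' : 0 < ‖x‖ := norm_pos_iff.2 hx
  unfold regK biotSavartK
  rw [norm_smul, norm_smul]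
  refine mul_le_mul_of_nonneg_right ?_ (norm_nonneg _)
  rw [Real.norm_of_nonneg (by positivity), Real.norm_of_nonneg (by positivity)]
  gcongr
  linarith

lemma tendsto_regK (x : Plane) : Tendsto (fun n : ℕ => regK (1 / ((n : ℝ) + 1)) x) atTop
    (𝓝 (biotSavartK x)) := by
  rcases eq_or_ne x 0 with rfl | hx
  · simp [regK, biotSavartK]
  have hx' : 0 < ‖x‖ := norm_pos_iff.2 hx
  unfold regK biotSavartK
  refine Tendsto.smul_const ?_ _
  refine Tendsto.div tendsto_const_nhds ?_ (by positivity)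
  refine Tendsto.const_mul _ ?_
  simpa using tendsto_one_div_add_atTop_nhds_zero_nat.const_add (‖x‖ ^ 2)

lemma locallyIntegrable_kernel_sub (x : Plane) :
    LocallyIntegrable (fun y => biotSavartK (x - y)) (volume : Measure Plane) := by
  rw [locallyIntegrable_iff]
  intro k hk
  have h := (locallyIntegrable_iff.1 locallyIntegrable_kernel) ((fun y => x - y) '' k)
    (hk.image (by fun_prop))
  have hm := Measure.measurePreserving_sub_left (volume : Measure Plane) x
  have := hm.integrableOn_comp_preimage (Homeomorph.subLeft x).measurableEmbedding
    (f := biotSavartK) (s := (fun y => x - y) '' k)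
  rw [Set.preimage_image_eq _ sub_right_injective] at this
  exact this.2 h

lemma integrable_vel {f : Plane → ℝ} (hf : Continuous f) (hc : HasCompactSupport f) (x : Plane) :
    Integrable (fun y => f y • biotSavartK (x - y)) :=
  (locallyIntegrable_kernel_sub x).integrable_smul_left_of_hasCompactSupport hf hc

/-- The mass of the kernel on a ball is bounded uniformly in the position of its singularity, so
bounded vorticity supported in a fixed ball induces uniformly bounded velocity. -/
lemma exists_norm_vel_le (R : ℝ) : ∃ C > 0, ∀ (f : Plane → ℝ) (A : ℝ) (x : Plane),
    (∀ y, |f y| ≤ A) → (∀ y, R < ‖y‖ → f y = 0) → ‖vel f x‖ ≤ A * C := by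
  set k : Plane → ℝ := (Metric.ball (0 : Plane) 1).indicator (fun z => ‖biotSavartK z‖) with hk
  set b : Plane → ℝ := (Metric.closedBall (0 : Plane) R).indicator (fun _ => (1 : ℝ)) with hb
  have hki : Integrable k := by
    rw [hk, integrable_indicator_iff measurableSet_ball]
    exact (((locallyIntegrable_iff.1 locallyIntegrable_kernel) _
      (isCompact_closedBall (0 : Plane) 1)).mono_set Metric.ball_subset_closedBall).norm
  have hbi : Integrable b := by
    rw [hb, integrable_indicator_iff measurableSet_closedBall]
    exact integrableOn_const (measure_closedBall_lt_top.ne)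
  have hk0 : 0 ≤ ∫ z, k z := integral_nonneg fun z => indicator_nonneg (fun _ _ => norm_nonneg _) _
  have hb0 : 0 ≤ ∫ z, b z := integral_nonneg fun z => indicator_nonneg (fun _ _ => zero_le_one) _
  refine ⟨(∫ z, k z) + (∫ z, b z) + 1, by positivity, fun f A x hA hR => ?_⟩
  have hA0 : 0 ≤ A := (abs_nonneg _).trans (hA 0)
  have hGi : Integrable (fun y => A * (k (x - y) + b y)) :=
    ((hki.comp_sub_left x).add hbi).const_mul A
  calc ‖vel f x‖ ≤ ∫ y, A * (k (x - y) + b y) := by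
        refine norm_integral_le_of_norm_le hGi (Eventually.of_forall fun y => ?_)
        have hk1 : 0 ≤ k (x - y) := indicator_nonneg (fun _ _ => norm_nonneg _) _
        have hb1 : 0 ≤ b y := indicator_nonneg (fun _ _ => zero_le_one) _
        by_cases hy : R < ‖y‖
        · rw [hR y hy]; simp; positivity
        rw [norm_smul]
        refine mul_le_mul (hA y) ?_ (norm_nonneg _) hA0
        have hby : b y = 1 := by
          rw [hb, indicator_of_mem]; simpa using hy
        by_cases hxy : x - y ∈ Metric.ball (0 : Plane) 1
        · have : k (x - y) = ‖biotSavartK (x - y)‖ := by rw [hk, indicator_of_mem hxy]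
          rw [this, hby]; linarith
        · have h1 : 1 ≤ ‖x - y‖ := by simpa using hxy
          rw [norm_kernel, hby]
          have : 1 / (2 * π * ‖x - y‖) ≤ 1 := by
            rw [div_le_one (by positivity)]
            nlinarith [Real.pi_gt_three]
          linarith
    _ = A * ((∫ z, k z) + ∫ z, b z) := by
        rw [integral_const_mul, integral_add (hki.comp_sub_left x) hbi,
          integral_sub_left_eq_self k volume x]
    _ ≤ A * ((∫ z, k z) + (∫ z, b z) + 1) :=
        mul_le_mul_of_nonneg_left (by linarith) hA0

/-- Convolution with the kernel may be differentiated by differentiating the vorticity. -/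
lemma hasFDerivAt_vel {f : Plane → ℝ} (hf : ContDiff ℝ 1 f) (hc : HasCompactSupport f)
    (x : Plane) : ∃ A : Plane →L[ℝ] Plane, HasFDerivAt (vel f) A x ∧
      ∀ v, A v = vel (fun y => fderiv ℝ f y v) x := by
  set L : Plane →L[ℝ] ℝ →L[ℝ] Plane := (ContinuousLinearMap.lsmul ℝ ℝ).flip with hL
  have hvel : vel f = MeasureTheory.convolution biotSavartK f L volume := by
    ext1 x
    rw [vel, MeasureTheory.convolution, ← integral_sub_left_eq_self _ volume x]
    simp [hL]
  have h := hc.hasFDerivAt_convolution_right L locallyIntegrable_kernel hf x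
  rw [← hvel] at h
  refine ⟨_, h, fun v => ?_⟩
  have hce := (hc.fderiv ℝ).convolutionExists_right (L.precompR Plane) locallyIntegrable_kernel
    (hf.continuous_fderiv (by simp)) x
  rw [MeasureTheory.convolution, ContinuousLinearMap.integral_apply hce, vel,
    ← integral_sub_left_eq_self _ volume x]
  simp [hL]

/-! ### The induced velocity is differentiable and divergence free -/

lemma coord_apply (i : Fin 2) (z : Plane) : (EuclideanSpace.proj i : Plane →L[ℝ] ℝ) z = z i := rfl

lemma tr2_fderiv_kernel {x : Plane} (hx : x ≠ 0) : tr2 (fderiv ℝ biotSavartK x) = 0 := by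
  rw [← regK_zero]; exact tr2_fderiv_regK (by simpa using hx)

lemma differentiableAt_kernel {x : Plane} (hx : x ≠ 0) : DifferentiableAt ℝ biotSavartK x := by
  rw [← regK_zero]; exact differentiableAt_regK (by simpa using hx)

lemma integrable_smul_regK {f : Plane → ℝ} (hf : Continuous f) (hc : HasCompactSupport f) {ε : ℝ}
    (hε : 0 < ε) (x : Plane) : Integrable (fun y => f y • regK ε (x - y)) := by
  have hK : Continuous (regK ε) :=
    (show Differentiable ℝ (regK ε) from fun z => differentiableAt_regK (by positivity)).continuous
  refine (hf.smul (hK.comp (by fun_prop))).integrable_of_hasCompactSupport ?_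
  exact hc.smul_right

/-- The Biot–Savart kernel is divergence free in the sense of distributions. -/
lemma div_vel_near {f : Plane → ℝ} (hf : ContDiff ℝ 1 f) (hc : HasCompactSupport f) (x : Plane) :
    vel (fun y => fderiv ℝ f y (EuclideanSpace.single 0 1)) x 0 +
      vel (fun y => fderiv ℝ f y (EuclideanSpace.single 1 1)) x 1 = 0 := by
  set e : Fin 2 → Plane := fun i => EuclideanSpace.single i 1 with he
  have hd : ∀ i, Continuous (fun y => fderiv ℝ f y (e i)) := fun i =>
    (hf.continuous_fderiv (by simp)).clm_apply continuous_const
  have hdc : ∀ i, HasCompactSupport (fun y => fderiv ℝ f y (e i)) := fun i => hc.fderiv_apply ℝ (e i)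
  -- Integration by parts is carried out with the regularised kernel; the limit is taken by dominated
  -- convergence.
  have key : ∀ ε > 0, (∫ y, fderiv ℝ f y (e 0) • regK ε (x - y)) 0 +
      (∫ y, fderiv ℝ f y (e 1) • regK ε (x - y)) 1 = 0 := by
    intro ε hε
    have hKd : Differentiable ℝ (regK ε) := fun z => differentiableAt_regK (by positivity)
    have hG : ∀ (i : Fin 2) (y : Plane), HasFDerivAt (fun y => regK ε (x - y) i)
        ((EuclideanSpace.proj i : Plane →L[ℝ] ℝ).comp ((fderiv ℝ (regK ε) (x - y)).comp
          (-(ContinuousLinearMap.id ℝ Plane)))) y := fun i y =>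
      (EuclideanSpace.proj i : Plane →L[ℝ] ℝ).hasFDerivAt.comp y
        ((hKd (x - y)).hasFDerivAt.comp y ((hasFDerivAt_id y).const_sub x))
    have hsm : ContDiff ℝ 1 (regK ε) := by
      unfold regK
      have hp : ∀ i : Fin 2, ContDiff ℝ 1 (fun z : Plane => z i) := fun i =>
        (EuclideanSpace.proj i : Plane →L[ℝ] ℝ).contDiff
      have hi : ContDiff ℝ 1 (fun z : Plane => 1 / (2 * π * (‖z‖ ^ 2 + ε))) :=
        contDiff_const.div (contDiff_const.mul ((contDiff_norm_sq ℝ).add contDiff_const))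
          (fun z => by positivity)
      exact hi.smul (((hp 1).neg.smul contDiff_const).add ((hp 0).smul contDiff_const))
    have hKc : Continuous fun y => fderiv ℝ (regK ε) (x - y) :=
      (hsm.continuous_fderiv (by simp)).comp (by fun_prop)
    have hGd : ∀ i v, Continuous (fun y => fderiv ℝ (fun y => regK ε (x - y) i) y v) := by
      intro i v
      have : (fun y => fderiv ℝ (fun y => regK ε (x - y) i) y v) =
          fun y => -(fderiv ℝ (regK ε) (x - y) v i) := by
        ext y; rw [(hG i y).fderiv]; simp
      rw [this]
      have h1 := hKc.clm_apply (continuous_const (y := v))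
      exact ((EuclideanSpace.proj i : Plane →L[ℝ] ℝ).continuous.comp h1).neg
    have hGc : ∀ i, Continuous (fun y => regK ε (x - y) i) := fun i =>
      (show Differentiable ℝ (fun y => regK ε (x - y) i) from
        fun y => (hG i y).differentiableAt).continuous
    have hint1 : ∀ i, Integrable fun y =>
        fderiv ℝ (fun y => regK ε (x - y) i) y (e i) * f y := fun i =>
      ((hGd i (e i)).mul hf.continuous).integrable_of_hasCompactSupport hc.mul_left
    have hparts : ∀ i, (∫ y, fderiv ℝ f y (e i) • regK ε (x - y)) i =
        -∫ y, fderiv ℝ (fun y => regK ε (x - y) i) y (e i) * f y := by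
      intro i
      have h1 : (∫ y, fderiv ℝ f y (e i) • regK ε (x - y)) i =
          ∫ y, regK ε (x - y) i * fderiv ℝ f y (e i) := by
        have := (EuclideanSpace.proj i : Plane →L[ℝ] ℝ).integral_comp_comm
          (integrable_smul_regK (hd i) (hdc i) hε x)
        simp only [coord_apply] at this
        rw [← this]
        refine integral_congr_ae (Eventually.of_forall fun y => ?_)
        simp [mul_comm]
      rw [h1]
      refine integral_mul_fderiv_eq_neg_fderiv_mul_of_integrable (hint1 i) ?_ ?_
        (fun y _ => (hG i y).differentiableAt) (fun y _ => hf.differentiable (by simp) y)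
      · exact ((hGc i).mul (hd i)).integrable_of_hasCompactSupport (hdc i).mul_left
      · exact ((hGc i).mul hf.continuous).integrable_of_hasCompactSupport hc.mul_left
    rw [hparts 0, hparts 1, ← neg_add, ← integral_add (hint1 0) (hint1 1), neg_eq_zero]
    refine integral_eq_zero_of_ae (Eventually.of_forall fun y => ?_)
    have ht := tr2_fderiv_regK (ε := ε) (x := x - y) (by positivity)
    rw [tr2_apply] at ht
    simp only [(hG 0 y).fderiv, (hG 1 y).fderiv, ← add_mul]
    simp only [ContinuousLinearMap.comp_apply, neg_apply,
      ContinuousLinearMap.id_apply, map_neg, coord_apply, he, Pi.zero_apply]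
    rw [← neg_add, ht]; simp
  have hlim : ∀ i, Tendsto (fun n : ℕ => ∫ y, fderiv ℝ f y (e i) • regK (1 / ((n : ℝ) + 1)) (x - y))
      atTop (𝓝 (vel (fun y => fderiv ℝ f y (e i)) x)) := by
    intro i
    refine tendsto_integral_of_dominated_convergence
      (fun y => ‖fderiv ℝ f y (e i) • biotSavartK (x - y)‖) (fun n => ?_)
      (integrable_vel (hd i) (hdc i) x).norm (fun n => Eventually.of_forall fun y => ?_)
      (Eventually.of_forall fun y => (tendsto_regK (x - y)).const_smul _)
    · exact (integrable_smul_regK (hd i) (hdc i) (by positivity) x).aestronglyMeasurable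
    · rw [norm_smul, norm_smul]
      exact mul_le_mul_of_nonneg_left (norm_regK_le (by positivity) _) (norm_nonneg _)
  have h0 := ((EuclideanSpace.proj 0 : Plane →L[ℝ] ℝ).continuous.tendsto _).comp (hlim 0)
  have h1 := ((EuclideanSpace.proj 1 : Plane →L[ℝ] ℝ).continuous.tendsto _).comp (hlim 1)
  refine tendsto_nhds_unique (h0.add h1) ?_
  refine tendsto_const_nhds.congr fun n => ?_
  exact (key _ (by positivity)).symm

/-- The part of the vorticity away from `x₀` contributes a differentiable, divergence free
velocity near `x₀`. -/
lemma hasFDerivAt_vel_far {f : Plane → ℝ} (hf : Continuous f) {x₀ x₁ : Plane}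
    (h0 : ∀ y ∈ Metric.ball x₀ 2, f y = 0)
    (hi : Integrable (fun y => f y • biotSavartK (x₁ - y))) :
    (∀ x ∈ Metric.ball x₀ 1, Integrable (fun y => f y • biotSavartK (x - y))) ∧
    ∃ A : Plane →L[ℝ] Plane, HasFDerivAt (vel f) A x₀ ∧ tr2 A = 0 := by
  have hmeas : ∀ x, AEStronglyMeasurable (fun y => f y • biotSavartK (x - y)) volume := fun x =>
    hf.aestronglyMeasurable.smul
      (measurable_kernel.comp (measurable_const.sub measurable_id)).aestronglyMeasurable
  have hfar : ∀ x ∈ Metric.ball x₀ 1, ∀ y, f y ≠ 0 → 1 ≤ ‖x - y‖ := by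
    intro x hx y hy
    by_contra hlt
    push Not at hlt
    refine hy (h0 y ?_)
    rw [Metric.mem_ball, dist_eq_norm] at hx ⊢
    calc ‖y - x₀‖ = ‖(x - x₀) - (x - y)‖ := by congr 1; abel
      _ ≤ ‖x - x₀‖ + ‖x - y‖ := norm_sub_le _ _
      _ < 2 := by linarith
  -- On the support of `f` the distances to `x` and to `x₁` are comparable, so integrability at `x₁`
  -- carries over to `x`.
  have hintg : ∀ x ∈ Metric.ball x₀ 1, Integrable (fun y => f y • biotSavartK (x - y)) := by
    intro x hx
    refine Integrable.mono' (hi.norm.const_mul (1 + ‖x - x₁‖)) (hmeas x) ?_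
    have hne : ∀ᵐ y : Plane, y ≠ x₁ := by
      simp [ae_iff, measure_singleton]
    filter_upwards [hne] with y hy
    rcases eq_or_ne (f y) 0 with h | h
    · simp [h]
    have h1 := hfar x hx y h
    have h2 : 0 < ‖x₁ - y‖ := norm_pos_iff.2 (sub_ne_zero.2 hy.symm)
    have h3 : ‖x₁ - y‖ ≤ ‖x - x₁‖ + ‖x - y‖ := by
      calc ‖x₁ - y‖ = ‖(x - y) - (x - x₁)‖ := by congr 1; abel
        _ ≤ _ := by rw [add_comm]; exact norm_sub_le _ _
    rw [norm_smul, norm_smul, norm_kernel, norm_kernel, mul_left_comm]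
    refine mul_le_mul_of_nonneg_left ?_ (norm_nonneg _)
    rw [mul_one_div, div_le_div_iff₀ (by positivity) (by positivity)]
    have : 0 ≤ ‖x - x₁‖ := norm_nonneg _
    have h4 : ‖x₁ - y‖ ≤ (1 + ‖x - x₁‖) * ‖x - y‖ := by nlinarith
    nlinarith [Real.pi_pos]
  refine ⟨hintg, ?_⟩
  have hx₀ : x₀ ∈ Metric.ball x₀ 1 := Metric.mem_ball_self one_pos
  have hFm : AEStronglyMeasurable (fun y => f y • fderiv ℝ biotSavartK (x₀ - y)) volume :=
    hf.aestronglyMeasurable.smul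
      ((measurable_fderiv ℝ biotSavartK).comp
        (measurable_const.sub measurable_id)).aestronglyMeasurable
  have hdiff : ∀ y, HasFDerivAt (fun x => f y • biotSavartK (x - y))
      (f y • fderiv ℝ biotSavartK (x₀ - y)) x₀ := by
    intro y
    rcases eq_or_ne (f y) 0 with h | h
    · rw [h, show (0 : ℝ) • fderiv ℝ biotSavartK (x₀ - y) = 0 by
        ext v i; simp]
      simpa using hasFDerivAt_const (𝕜 := ℝ) (0 : Plane) x₀
    have hne : x₀ - y ≠ 0 := norm_pos_iff.1 (by linarith [hfar x₀ hx₀ y h])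
    exact ((differentiableAt_kernel hne).hasFDerivAt.comp x₀
        ((hasFDerivAt_id x₀).sub_const y)).const_smul (f y)
  obtain ⟨hI, hD⟩ := hasFDerivAt_integral_of_dominated_loc_of_lip' (μ := volume) (𝕜 := ℝ)
    (F := fun x y => f y • biotSavartK (x - y))
    (F' := fun y => f y • fderiv ℝ biotSavartK (x₀ - y)) (x₀ := x₀)
    (bound := fun y => ‖f y • biotSavartK (x₀ - y)‖)
    (Metric.ball_mem_nhds x₀ one_pos) (fun x _ => hmeas x) (hintg x₀ hx₀) hFm
    (Eventually.of_forall fun y x hx => by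
      rcases eq_or_ne (f y) 0 with h | h
      · simp [h]
      have h1 := hfar x hx y h
      have h2 := hfar x₀ hx₀ y h
      rw [← smul_sub, norm_smul, norm_smul, mul_assoc]
      refine mul_le_mul_of_nonneg_left ?_ (norm_nonneg _)
      rw [norm_kernel_sub (norm_pos_iff.1 (by linarith)) (norm_pos_iff.1 (by linarith)),
        norm_kernel, show x - y - (x₀ - y) = x - x₀ by abel, one_div_mul_eq_div,
        div_le_div_iff₀ (by positivity) (by positivity)]
      refine mul_le_mul_of_nonneg_left ?_ (norm_nonneg _)
      have := Real.pi_pos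
      nlinarith [mul_pos this (by linarith : 0 < ‖x₀ - y‖)])
    (hintg x₀ hx₀).norm
    (Eventually.of_forall hdiff)
  refine ⟨_, hD, ?_⟩
  rw [← tr2.integral_comp_comm hI]
  refine integral_eq_zero_of_ae (Eventually.of_forall fun y => ?_)
  rcases eq_or_ne (f y) 0 with h | h
  · simp [h]
  have hne : x₀ - y ≠ 0 := norm_pos_iff.1 (by linarith [hfar x₀ hx₀ y h])
  simp [tr2_fderiv_kernel hne]

/-- A velocity field induced by a `C¹` vorticity is differentiable and divergence free. No decay of
`f` is needed: the integrand is integrable either for every position or for none, and in the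
latter case the Bochner integral makes `vel f` vanish identically. -/
lemma exists_hasFDerivAt_vel {f : Plane → ℝ} (hf : ContDiff ℝ 1 f) (x₀ : Plane) :
    ∃ A : Plane →L[ℝ] Plane, HasFDerivAt (vel f) A x₀ ∧ tr2 A = 0 := by
  by_cases hex : ∃ x₁, Integrable (fun y => f y • biotSavartK (x₁ - y))
  · obtain ⟨x₁, hi⟩ := hex
    -- The cut-off splits `f` into a compactly supported part and a part vanishing near `x₀`.
    let χ : ContDiffBump x₀ := ⟨2, 3, by norm_num, by norm_num⟩
    have hχ : ContDiff ℝ 1 (fun y => χ y) := χ.contDiff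
    set fn : Plane → ℝ := fun y => χ y * f y with hfn
    set ff : Plane → ℝ := fun y => (1 - χ y) * f y with hff
    have hfn1 : ContDiff ℝ 1 fn := hχ.mul hf
    have hfnc : HasCompactSupport fn := χ.hasCompactSupport.mul_right
    have hffc : Continuous ff := (continuous_const.sub hχ.continuous).mul hf.continuous
    have hff0 : ∀ y ∈ Metric.ball x₀ 2, ff y = 0 := by
      intro y hy
      have : χ y = 1 := χ.one_of_mem_closedBall (Metric.ball_subset_closedBall hy)
      simp [hff, this]
    have hffi : Integrable (fun y => ff y • biotSavartK (x₁ - y)) := by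
      refine (hi.sub (integrable_vel hfn1.continuous hfnc x₁)).congr
        (Eventually.of_forall fun y => ?_)
      simp only [hff, hfn, Pi.sub_apply, ← sub_smul]
      congr 1; ring
    obtain ⟨hintg, Af, hAf, htf⟩ := hasFDerivAt_vel_far hffc hff0 hffi
    obtain ⟨An, hAn, hAn'⟩ := hasFDerivAt_vel hfn1 hfnc x₀
    refine ⟨An + Af, (hAn.add hAf).congr_of_eventuallyEq ?_, ?_⟩
    · filter_upwards [Metric.ball_mem_nhds x₀ one_pos] with x hx
      rw [Pi.add_apply, vel, vel, vel,
        ← integral_add (integrable_vel hfn1.continuous hfnc x) (hintg x hx)]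
      refine integral_congr_ae (Eventually.of_forall fun y => ?_)
      simp only [hff, hfn, ← add_smul]
      congr 1; ring
    · rw [map_add, htf, tr2_apply, hAn', hAn', div_vel_near hfn1 hfnc, add_zero]
  · refine ⟨0, ?_, by simp⟩
    have : vel f = fun _ => 0 := by
      ext1 x
      exact integral_undef fun h => hex ⟨x, h⟩
    rw [this]
    exact hasFDerivAt_const _ _

/-! ### The flow map and the transport of vorticity -/

/-- A smooth solution `ω` of the 2D Euler equation in vorticity form with initial datum `g`, together
with the flow map `φ` of its velocity field `vel (ω t)`. -/
structure EulerFlow (g : Plane → ℝ) (ω : ℝ → Plane → ℝ) (φ : ℝ → Plane → Plane) : Prop where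
  smooth_vort : ContDiff ℝ (⊤ : ℕ∞) (fun p : ℝ × Plane => ω p.1 p.2)
  init_vort : ω 0 = g
  euler : ∀ t x, HasDerivAt (fun s => ω s x) (-(fderiv ℝ (ω t) x (vel (ω t) x))) t
  smooth_flow : ContDiff ℝ (⊤ : ℕ∞) (fun p : ℝ × Plane => φ p.1 p.2)
  init_flow : ∀ x, φ 0 x = x
  ode : ∀ t x, HasDerivAt (fun s => φ s x) (vel (ω t) (φ t x)) t

section Slices

variable {F : Type*} [NormedAddCommGroup F] [NormedSpace ℝ F] {ψ : ℝ → Plane → F}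

lemma contDiff_slice {n : WithTop ℕ∞} (h : ContDiff ℝ n (fun p : ℝ × Plane => ψ p.1 p.2))
    (t : ℝ) : ContDiff ℝ n (ψ t) :=
  h.comp (contDiff_const.prodMk contDiff_id)

lemma hasFDerivAt_slice (h : ContDiff ℝ (⊤ : ℕ∞) (fun p : ℝ × Plane => ψ p.1 p.2))
    (t : ℝ) (x : Plane) : HasFDerivAt (ψ t)
      ((fderiv ℝ (fun p : ℝ × Plane => ψ p.1 p.2) (t, x)).comp
        (ContinuousLinearMap.inr ℝ ℝ Plane)) x := by
  have h1 := (h.differentiable (by simp) (t, x)).hasFDerivAt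
  exact h1.comp x (hasFDerivAt_prodMk_right t x)

/-- Joint continuity of the spatial derivative. -/
lemma continuous_fderiv_slice (h : ContDiff ℝ (⊤ : ℕ∞) (fun p : ℝ × Plane => ψ p.1 p.2)) :
    Continuous (fun p : ℝ × Plane => fderiv ℝ (ψ p.1) p.2) := by
  have : (fun p : ℝ × Plane => fderiv ℝ (ψ p.1) p.2) = fun p =>
      (fderiv ℝ (fun p : ℝ × Plane => ψ p.1 p.2) p).comp (ContinuousLinearMap.inr ℝ ℝ Plane) := by
    ext1 p; exact (hasFDerivAt_slice h p.1 p.2).fderiv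
  rw [this]
  exact (h.continuous_fderiv (by simp)).clm_comp continuous_const

lemma hasDerivAt_curve {Φ : ℝ × Plane → F} {Φ' : ℝ × Plane →L[ℝ] F} {γ : ℝ → Plane} {w : Plane}
    {t : ℝ} (h : HasFDerivAt Φ Φ' (t, γ t)) (hγ : HasDerivAt γ w t) :
    HasDerivAt (fun s => Φ (s, γ s)) (Φ' (1, w)) t :=
  HasFDerivAt.comp_hasDerivAt (f := fun s => (s, γ s)) t h ((hasDerivAt_id' t).prodMk hγ)

/-- Total derivative along a curve. -/
lemma hasDerivAt_along (h : ContDiff ℝ (⊤ : ℕ∞) (fun p : ℝ × Plane => ψ p.1 p.2))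
    {γ : ℝ → Plane} {t : ℝ} {w : Plane} {p : F} (hγ : HasDerivAt γ w t)
    (hp : HasDerivAt (fun s => ψ s (γ t)) p t) :
    HasDerivAt (fun s => ψ s (γ s)) (p + fderiv ℝ (ψ t) (γ t) w) t := by
  have h1 := (h.differentiable (by simp) (t, γ t)).hasFDerivAt
  have h2 : HasDerivAt (fun s => ψ s (γ s))
      (fderiv ℝ (fun p : ℝ × Plane => ψ p.1 p.2) (t, γ t) (1, w)) t :=
    hasDerivAt_curve h1 hγ
  have h3 : HasDerivAt (fun s => ψ s (γ t))
      (fderiv ℝ (fun p : ℝ × Plane => ψ p.1 p.2) (t, γ t) (1, 0)) t :=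
    hasDerivAt_curve (γ := fun _ => γ t) h1 (hasDerivAt_const t (γ t))
  convert h2 using 1
  rw [hp.unique h3, (hasFDerivAt_slice h t (γ t)).fderiv, ContinuousLinearMap.comp_apply,
    ContinuousLinearMap.inr_apply, ← map_add]
  simp

/-- Equality of mixed partial derivatives in time and space. -/
lemma hasDerivAt_fderiv_slice (h : ContDiff ℝ (⊤ : ℕ∞) (fun p : ℝ × Plane => ψ p.1 p.2))
    {V : Plane → F} {t : ℝ} {x : Plane} {V' : Plane →L[ℝ] F}
    (hV : ∀ y, HasDerivAt (fun s => ψ s y) (V y) t) (hV' : HasFDerivAt V V' x) (v : Plane) :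
    HasDerivAt (fun s => fderiv ℝ (ψ s) x v) (V' v) t := by
  set Ψ : ℝ × Plane → F := fun p => ψ p.1 p.2 with hΨ
  have hd : ∀ p, HasFDerivAt Ψ (fderiv ℝ Ψ p) p :=
    fun p => (h.differentiable (by simp) p).hasFDerivAt
  have hd2 : HasFDerivAt (fderiv ℝ Ψ) (fderiv ℝ (fderiv ℝ Ψ) (t, x)) (t, x) :=
    (((h.fderiv_right (m := 1) (by norm_cast)).differentiable (by simp)) (t, x)).hasFDerivAt
  have hsymm : IsSymmSndFDerivAt ℝ Ψ (t, x) :=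
    h.contDiffAt.isSymmSndFDerivAt (by
      simpa using WithTop.coe_le_coe.2 (le_top : (2 : ℕ∞) ≤ ⊤))
  have hVeq : V = fun y => fderiv ℝ Ψ (t, y) (1, 0) := by
    ext1 y
    exact (hV y).unique
      (hasDerivAt_curve (γ := fun _ => y) (hd (t, y)) (hasDerivAt_const t y))
  have hV2 : HasFDerivAt V (((ContinuousLinearMap.apply ℝ F ((1 : ℝ), (0 : Plane))).comp
      (fderiv ℝ (fderiv ℝ Ψ) (t, x))).comp (ContinuousLinearMap.inr ℝ ℝ Plane)) x := by
    rw [hVeq]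
    exact ((ContinuousLinearMap.apply ℝ F ((1 : ℝ), (0 : Plane))).hasFDerivAt.comp (t, x)
      hd2).comp x (hasFDerivAt_prodMk_right t x)
  have h1 : HasDerivAt (fun s => fderiv ℝ Ψ (s, x) (0, v))
      (fderiv ℝ (fderiv ℝ Ψ) (t, x) (1, 0) (0, v)) t :=
    hasDerivAt_curve (γ := fun _ => x)
      ((ContinuousLinearMap.apply ℝ F ((0 : ℝ), v)).hasFDerivAt.comp (t, x) hd2)
      (hasDerivAt_const t x)
  have h2 : (fun s => fderiv ℝ (ψ s) x v) = fun s => fderiv ℝ Ψ (s, x) (0, v) := by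
    ext1 s
    rw [(hasFDerivAt_slice h s x).fderiv]; rfl
  rw [h2, hV'.unique hV2]
  convert h1 using 1
  exact hsymm.eq _ _

end Slices

lemma plane_eq_sum (w : Plane) :
    w = w 0 • EuclideanSpace.single 0 (1 : ℝ) + w 1 • EuclideanSpace.single 1 (1 : ℝ) := by
  apply plane_eq_of_coord <;> simp

lemma clm_apply_coord (A : Plane →L[ℝ] Plane) (w : Plane) (i : Fin 2) :
    A w i = w 0 * A (EuclideanSpace.single 0 1) i + w 1 * A (EuclideanSpace.single 1 1) i := by
  conv_lhs => rw [plane_eq_sum w]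
  simp

lemma plane_det (A : Plane →L[ℝ] Plane) :
    A.det = A (EuclideanSpace.single 0 1) 0 * A (EuclideanSpace.single 1 1) 1 -
      A (EuclideanSpace.single 1 1) 0 * A (EuclideanSpace.single 0 1) 1 := by
  rw [ContinuousLinearMap.det,
    ← LinearMap.det_toMatrix (EuclideanSpace.basisFun (Fin 2) ℝ).toBasis, Matrix.det_fin_two]
  simp [LinearMap.toMatrix_apply]

/-- Incompressibility of the flow. -/
lemma det_fderiv_flow {g ω φ} (hF : EulerFlow g ω φ) (t : ℝ) (x : Plane) :
    (fderiv ℝ (φ t) x).det = 1 := by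
  set e : Fin 2 → Plane := fun i => EuclideanSpace.single i 1 with he
  have hD : ∀ s, HasDerivAt (fun s => (fderiv ℝ (φ s) x).det) 0 s := by
    intro s
    obtain ⟨A, hA, htr⟩ := exists_hasFDerivAt_vel
      ((contDiff_slice hF.smooth_vort s).of_le (by norm_cast)) (φ s x)
    have hflow := ((contDiff_slice hF.smooth_flow s).differentiable (by simp) x).hasFDerivAt
    have hJ : ∀ i j, HasDerivAt (fun s => fderiv ℝ (φ s) x (e j) i)
        (A (fderiv ℝ (φ s) x (e j)) i) s := fun i j =>
      (EuclideanSpace.proj i : Plane →L[ℝ] ℝ).hasFDerivAt.comp_hasDerivAt s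
        (hasDerivAt_fderiv_slice hF.smooth_flow (hF.ode s) (hA.comp x hflow) (e j))
    simp only [plane_det]
    refine (((hJ 0 0).mul (hJ 1 1)).sub ((hJ 0 1).mul (hJ 1 0))).congr_deriv ?_
    rw [tr2_apply] at htr
    simp only [clm_apply_coord A (fderiv ℝ (φ s) x _), he]
    have : A (EuclideanSpace.single 1 1) 1 = - A (EuclideanSpace.single 0 1) 0 := by linarith
    rw [this]
    ring
  have hc := is_const_of_deriv_eq_zero (fun s => (hD s).differentiableAt)
    (fun s => (hD s).deriv) t 0
  rw [hc, show φ 0 = id from funext hF.init_flow, fderiv_id, plane_det]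
  simp

/-- The vorticity is constant along trajectories. -/
lemma vort_transport {g ω φ} (hF : EulerFlow g ω φ) (t : ℝ) (x : Plane) :
    ω t (φ t x) = g x := by
  have hD : ∀ s, HasDerivAt (fun s => ω s (φ s x)) 0 s := by
    intro s
    exact (hasDerivAt_along hF.smooth_vort (hF.ode s x) (hF.euler s (φ s x))).congr_deriv
      (neg_add_cancel _)
  have hc := is_const_of_deriv_eq_zero (fun s => (hD s).differentiableAt)
    (fun s => (hD s).deriv) t 0
  simp only [hF.init_flow, hF.init_vort] at hc
  exact hc

/-! ### Surjectivity of the flow, propagation of support, and uniqueness -/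

/-- A differentiable self-map of the plane whose derivative has a uniformly bounded right inverse is
onto. Any minimiser of `‖F x - y‖ + c‖x‖`, with `c` small, solves `F x = y`: otherwise the first
summand could be decreased faster than the second one grows. -/
lemma surjective_of_bounded_inverse {F : Plane → Plane} (hF : Differentiable ℝ F) {C : ℝ}
    (hC : 0 < C) (hinv : ∀ x w, ∃ v, fderiv ℝ F x v = w ∧ ‖v‖ ≤ C * ‖w‖) :
    Function.Surjective F := by
  intro y
  have hcont : Continuous fun x => ‖F x - y‖ + 1 / (2 * C) * ‖x‖ := by
    have := hF.continuous
    fun_prop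
  have hlim : Tendsto (fun x : Plane => ‖F x - y‖ + 1 / (2 * C) * ‖x‖) (cocompact Plane) atTop := by
    refine tendsto_atTop_mono (f := fun x : Plane => 1 / (2 * C) * ‖x‖) (fun x => ?_) ?_
    · simp
    · exact (tendsto_norm_cocompact_atTop).const_mul_atTop (by positivity)
  obtain ⟨x, hx⟩ := hcont.exists_forall_le hlim
  refine ⟨x, ?_⟩
  by_contra hne
  obtain ⟨v, hv, hvn⟩ := hinv x (y - F x)
  have hw : 0 < ‖y - F x‖ := norm_pos_iff.2 (sub_ne_zero.2 (Ne.symm hne))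
  have hline : HasDerivAt (fun s : ℝ => F (x + s • v)) (y - F x) 0 := by
    have h1 : HasFDerivAt F (fderiv ℝ F x) (x + (0 : ℝ) • v) := by
      simpa using (hF x).hasFDerivAt
    have h2 : HasDerivAt (fun s : ℝ => x + s • v) v 0 := by
      simpa using ((hasDerivAt_id (0 : ℝ)).smul_const v).const_add x
    rw [← hv]
    exact HasFDerivAt.comp_hasDerivAt (f := fun s : ℝ => x + s • v) 0 h1 h2
  have hlo := hline.isLittleO
  rw [Asymptotics.isLittleO_iff] at hlo
  have hev : ∀ᶠ s in 𝓝[>] (0 : ℝ), ‖F (x + s • v) - F (x + (0 : ℝ) • v) - (s - 0) • (y - F x)‖ ≤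
      ‖y - F x‖ / 4 * ‖s - 0‖ := (hlo (by positivity)).filter_mono nhdsWithin_le_nhds
  have hlt : ∀ᶠ s in 𝓝[>] (0 : ℝ), s < 1 :=
    (eventually_lt_nhds one_pos).filter_mono nhdsWithin_le_nhds
  obtain ⟨s, ⟨hs1, hs2⟩, hs0⟩ := ((hev.and hlt).and self_mem_nhdsWithin).exists
  have hs0' : 0 < s := hs0
  simp only [zero_smul, add_zero, sub_zero, Real.norm_of_nonneg hs0'.le] at hs1
  have hmin := hx (x + s • v)
  have e1 : ‖F (x + s • v) - y‖ ≤ (1 - s) * ‖y - F x‖ + ‖y - F x‖ / 4 * s := by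
    calc ‖F (x + s • v) - y‖ =
        ‖(F (x + s • v) - F x - s • (y - F x)) - (1 - s) • (y - F x)‖ := by
          congr 1; module
      _ ≤ ‖y - F x‖ / 4 * s + ‖(1 - s) • (y - F x)‖ := (norm_sub_le _ _).trans (by gcongr)
      _ = _ := by
        rw [norm_smul, Real.norm_of_nonneg (by linarith)]; ring
  have e2 : ‖x + s • v‖ ≤ ‖x‖ + s * (C * ‖y - F x‖) := by
    refine (norm_add_le _ _).trans ?_
    rw [norm_smul, Real.norm_of_nonneg hs0'.le]
    gcongr
  have e3 : 1 / (2 * C) * ‖x + s • v‖ ≤ 1 / (2 * C) * ‖x‖ + s * ‖y - F x‖ / 2 := by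
    calc 1 / (2 * C) * ‖x + s • v‖ ≤ 1 / (2 * C) * (‖x‖ + s * (C * ‖y - F x‖)) := by gcongr
      _ = _ := by field_simp
  rw [norm_sub_rev (F x) y] at hmin
  nlinarith [mul_pos hs0' hw]

/-- The bound on the entries and `det Dφ = 1` bound the inverse Jacobian matrices uniformly. -/
lemma flow_surjective {g ω φ} (hF : EulerFlow g ω φ) {t M : ℝ}
    (hM : ∀ (x : Plane) (i j : Fin 2), |fderiv ℝ (φ t) x (EuclideanSpace.single j 1) i| ≤ M) :
    Function.Surjective (φ t) := by
  have hM0 : 0 ≤ M := (abs_nonneg _).trans (hM 0 0 0)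
  refine surjective_of_bounded_inverse (C := 4 * M + 1)
    ((contDiff_slice hF.smooth_flow t).differentiable (by simp)) (by positivity) fun x w => ?_
  have hdet := det_fderiv_flow hF t x
  rw [plane_det] at hdet
  set D := fderiv ℝ (φ t) x
  set e : Fin 2 → Plane := fun i => EuclideanSpace.single i 1 with he
  -- the candidate preimage is given by the adjugate of the Jacobian matrix
  refine ⟨(D (e 1) 1 * w 0 - D (e 1) 0 * w 1) • e 0 + (-(D (e 0) 1) * w 0 + D (e 0) 0 * w 1) • e 1,
    ?_, ?_⟩
  · apply plane_eq_of_coord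
    · simp only [map_add, map_smul, PiLp.add_apply, PiLp.smul_apply, smul_eq_mul, he]
      linear_combination (w 0) * hdet
    · simp only [map_add, map_smul, PiLp.add_apply, PiLp.smul_apply, smul_eq_mul, he]
      linear_combination (w 1) * hdet
  · have h0 := abs_coord_le w 0
    have h1 := abs_coord_le w 1
    have hb : ∀ i j k, |D (e j) i * w k| ≤ M * ‖w‖ := fun i j k => by
      rw [abs_mul]
      exact mul_le_mul (hM x i j) (abs_coord_le w k) (abs_nonneg _) hM0
    have n1 : ∀ i, ‖e i‖ = 1 := fun i => by simp [he]
    refine (norm_add_le _ _).trans ?_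
    rw [norm_smul, norm_smul, n1, n1, mul_one, mul_one, Real.norm_eq_abs, Real.norm_eq_abs]
    have a1 := abs_sub (D (e 1) 1 * w 0) (D (e 1) 0 * w 1)
    have a2 := abs_add_le (-(D (e 0) 1) * w 0) (D (e 0) 0 * w 1)
    rw [neg_mul, abs_neg] at a2
    rw [neg_mul]
    have := hb 1 1 0
    have := hb 0 1 1
    have := hb 1 0 0
    have := hb 0 0 1
    have := norm_nonneg w
    linarith

/-- While the flow is onto, the vorticity is supported in the image of the initial support, hence in
a ball that is uniform on compact time intervals. -/
lemma exists_support_radius {g ω φ} (hF : EulerFlow g ω φ) (hgc : HasCompactSupport g) {T : ℝ}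
    (hs : ∀ t ∈ Icc 0 T, Function.Surjective (φ t)) :
    ∃ R, ∀ t ∈ Icc 0 T, ∀ y, R < ‖y‖ → ω t y = 0 := by
  have hK : IsCompact ((fun p : ℝ × Plane => φ p.1 p.2) '' (Icc 0 T ×ˢ tsupport g)) :=
    (isCompact_Icc.prod hgc).image hF.smooth_flow.continuous
  obtain ⟨R, hR⟩ := hK.isBounded.exists_norm_le
  refine ⟨R, fun t ht y hy => ?_⟩
  obtain ⟨x, rfl⟩ := hs t ht y
  rw [vort_transport hF]
  by_contra hne
  exact absurd (hR _ ⟨(t, x), ⟨ht, subset_tsupport g hne⟩, rfl⟩) (not_le.2 hy)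

lemma hasCompactSupport_of_radius {f : Plane → ℝ} {R : ℝ} (h : ∀ y, R < ‖y‖ → f y = 0) :
    HasCompactSupport f :=
  HasCompactSupport.intro (isCompact_closedBall (0 : Plane) R) fun y hy => h y (by simpa using hy)

lemma fderiv_eq_zero_of_radius {f : Plane → ℝ} {R : ℝ} (h : ∀ y, R < ‖y‖ → f y = 0) {y : Plane}
    (hy : R < ‖y‖) : fderiv ℝ f y = 0 := by
  have : f =ᶠ[𝓝 y] fun _ => 0 := by
    filter_upwards [(continuous_norm.isOpen_preimage _ isOpen_Ioi).mem_nhds hy] with z hz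
    exact h z hz
  rw [this.fderiv_eq]; simp

/-- A field that is continuous in space-time and vanishes outside a fixed ball is bounded on compact
time intervals. -/
lemma exists_bound_of_radius {F : Type*} [NormedAddCommGroup F] {G : ℝ → Plane → F}
    (hG : Continuous fun p : ℝ × Plane => G p.1 p.2) {T R : ℝ}
    (h : ∀ t ∈ Icc 0 T, ∀ y, R < ‖y‖ → G t y = 0) :
    ∃ L, 0 ≤ L ∧ ∀ t ∈ Icc 0 T, ∀ y, ‖G t y‖ ≤ L := by
  obtain ⟨L, hL⟩ := ((isCompact_Icc.prod (isCompact_closedBall (0 : Plane) R)).image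
    hG).isBounded.exists_norm_le
  refine ⟨max L 0, le_max_right _ _, fun t ht y => ?_⟩
  by_cases hy : R < ‖y‖
  · rw [h t ht y hy]; simp
  · refine (hL _ ⟨(t, y), ⟨ht, ?_⟩, rfl⟩).trans (le_max_left _ _)
    simpa using hy

lemma exists_vel_lipschitz {g ω φ} (hF : EulerFlow g ω φ) {T R : ℝ}
    (hR : ∀ t ∈ Icc 0 T, ∀ y, R < ‖y‖ → ω t y = 0) :
    ∃ Λ : NNReal, ∀ t ∈ Icc 0 T, LipschitzWith Λ (vel (ω t)) := by
  obtain ⟨L, hL0, hL⟩ := exists_bound_of_radius (G := fun t y => fderiv ℝ (ω t) y)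
    (continuous_fderiv_slice hF.smooth_vort)
    (fun t ht y hy => fderiv_eq_zero_of_radius (hR t ht) hy)
  obtain ⟨C, hC, hCb⟩ := exists_norm_vel_le R
  refine ⟨⟨L * C, mul_nonneg hL0 hC.le⟩, fun t ht => ?_⟩
  have hA := fun x => hasFDerivAt_vel ((contDiff_slice hF.smooth_vort t).of_le (by norm_cast))
    (hasCompactSupport_of_radius (hR t ht)) x
  refine lipschitzWith_of_nnnorm_fderiv_le (𝕜 := ℝ) (fun x => ?_) fun x => ?_
  · obtain ⟨A, h1, -⟩ := hA x
    exact h1.differentiableAt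
  · obtain ⟨A, h1, h2⟩ := hA x
    rw [h1.fderiv]
    refine NNReal.coe_le_coe.1 ?_
    refine A.opNorm_le_bound (mul_nonneg hL0 hC.le) fun v => ?_
    rw [h2 v]
    refine (hCb _ (L * ‖v‖) x (fun y => ?_) fun y hy => ?_).trans (le_of_eq ?_)
    · exact ((fderiv ℝ (ω t) y).le_opNorm v).trans (by gcongr; exact hL t ht y)
    · rw [fderiv_eq_zero_of_radius (hR t ht) hy]; rfl
    · change L * ‖v‖ * C = L * C * ‖v‖
      ring

lemma flow_injective {g ω φ} (hF : EulerFlow g ω φ) {T R : ℝ}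
    (hR : ∀ t ∈ Icc 0 T, ∀ y, R < ‖y‖ → ω t y = 0) {t : ℝ} (ht : t ∈ Icc 0 T) :
    Function.Injective (φ t) := by
  obtain ⟨Λ, hΛ⟩ := exists_vel_lipschitz hF hR
  intro x x' hxx
  have hc : ∀ x, ContinuousOn (fun s => φ s x) (Icc 0 t) := fun x s _ =>
    (hF.ode s x).continuousAt.continuousWithinAt
  have := ODE_solution_unique_of_mem_Icc_left (v := fun s => vel (ω s)) (s := fun _ => univ)
    (K := Λ) (fun s hs => (hΛ s ⟨hs.1.le, hs.2.trans ht.2⟩).lipschitzOnWith)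
    (hc x) (fun s _ => (hF.ode s x).hasDerivWithinAt) (fun _ _ => mem_univ _)
    (hc x') (fun s _ => (hF.ode s x').hasDerivWithinAt) (fun _ _ => mem_univ _) hxx
    (left_mem_Icc.2 ht.1)
  simpa [hF.init_flow] using this

/-- Two solutions of the Euler equation with the same compactly supported initial datum agree, as
long as their flows are onto. The difference of the vorticities, followed along the first flow, is
controlled by the difference of the velocities and hence by its own supremum. -/
lemma euler_unique {g ω φ ω' φ'} (hF : EulerFlow g ω φ) (hF' : EulerFlow g ω' φ')
    (hgc : HasCompactSupport g) {T : ℝ}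
    (hs : ∀ t ∈ Icc 0 T, Function.Surjective (φ t))
    (hs' : ∀ t ∈ Icc 0 T, Function.Surjective (φ' t)) {t : ℝ} (ht : t ∈ Icc 0 T) :
    ω t = ω' t := by
  obtain ⟨R₁, hR₁⟩ := exists_support_radius hF hgc hs
  obtain ⟨R₂, hR₂⟩ := exists_support_radius hF' hgc hs'
  set R := max R₁ R₂
  have hR : ∀ t ∈ Icc 0 T, ∀ y, R < ‖y‖ → ω t y = 0 :=
    fun t ht y hy => hR₁ t ht y ((le_max_left _ _).trans_lt hy)
  have hR' : ∀ t ∈ Icc 0 T, ∀ y, R < ‖y‖ → ω' t y = 0 :=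
    fun t ht y hy => hR₂ t ht y ((le_max_right _ _).trans_lt hy)
  obtain ⟨L, hL0, hL⟩ := exists_bound_of_radius (G := fun t y => fderiv ℝ (ω' t) y)
    (continuous_fderiv_slice hF'.smooth_vort)
    (fun t ht y hy => fderiv_eq_zero_of_radius (hR' t ht) hy)
  obtain ⟨A, hA0, hA⟩ := exists_bound_of_radius (G := fun t y => ω t y - ω' t y) (T := T) (R := R)
    (hF.smooth_vort.continuous.sub hF'.smooth_vort.continuous)
    (fun t ht y hy => by simp [hR t ht y hy, hR' t ht y hy])
  obtain ⟨C, hC, hCb⟩ := exists_norm_vel_le R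
  set κ := L * C with hκ
  have hκ0 : 0 ≤ κ := by positivity
  -- Each iteration halves the constant: the weight `exp (2κt)` integrates to at most `1/(2κ)` times
  -- itself, while the difference of the velocities costs a factor `κ`.
  have key : ∀ n : ℕ, ∀ t ∈ Icc 0 T, ∀ y, |ω t y - ω' t y| ≤
      A * (1 / 2) ^ n * Real.exp (2 * κ * t) := by
    intro n
    induction n with
    | zero =>
      intro t ht y
      refine (hA t ht y).trans ?_
      have : 1 ≤ Real.exp (2 * κ * t) := Real.one_le_exp (mul_nonneg (by positivity) ht.1)
      simpa using le_mul_of_one_le_right hA0 this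
    | succ n ih =>
      intro t ht y
      obtain ⟨x, rfl⟩ := hs t ht y
      have hvel : ∀ s ∈ Icc 0 T, ∀ z, ‖vel (ω s) z - vel (ω' s) z‖ ≤
          A * (1 / 2) ^ n * Real.exp (2 * κ * s) * C := by
        intro s hs z
        have h1 : vel (ω s) z - vel (ω' s) z = vel (fun y => ω s y - ω' s y) z := by
          have c1 := integrable_vel (contDiff_slice hF.smooth_vort s).continuous
            (hasCompactSupport_of_radius (hR s hs)) z
          have c2 := integrable_vel (contDiff_slice hF'.smooth_vort s).continuous
            (hasCompactSupport_of_radius (hR' s hs)) z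
          simp only [vel, sub_smul]
          rw [integral_sub c1 c2]
        rw [h1]
        exact hCb _ _ z (ih s hs) fun y hy => by simp [hR s hs y hy, hR' s hs y hy]
      have hder : ∀ s, HasDerivAt (fun s => ω s (φ s x) - ω' s (φ s x))
          (-(fderiv ℝ (ω' s) (φ s x) (vel (ω s) (φ s x) - vel (ω' s) (φ s x)))) s := by
        intro s
        have d1 := hasDerivAt_along hF.smooth_vort (hF.ode s x) (hF.euler s (φ s x))
        have d2 := hasDerivAt_along hF'.smooth_vort (hF.ode s x) (hF'.euler s (φ s x))
        refine (d1.sub d2).congr_deriv ?_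
        rw [map_sub]; ring
      have := image_norm_le_of_norm_deriv_right_le_deriv_boundary (a := 0) (b := t)
        (f := fun s => ω s (φ s x) - ω' s (φ s x))
        (B := fun s => A * (1 / 2) ^ (n + 1) * Real.exp (2 * κ * s))
        (B' := fun s => A * (1 / 2) ^ (n + 1) * (Real.exp (2 * κ * s) * (2 * κ)))
        (fun s _ => (hder s).continuousAt.continuousWithinAt)
        (fun s _ => (hder s).hasDerivWithinAt)
        (by
          simp only [hF.init_vort, hF'.init_vort, sub_self, norm_zero]
          positivity)
        (fun s => by
          have : HasDerivAt (fun s => 2 * κ * s) (2 * κ) s := by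
            simpa using (hasDerivAt_id s).const_mul (2 * κ)
          exact this.exp.const_mul _)
        (fun s hs => by
          have hsT : s ∈ Icc 0 T := ⟨hs.1, hs.2.le.trans ht.2⟩
          rw [norm_neg]
          refine (ContinuousLinearMap.le_opNorm _ _).trans ?_
          calc _ ≤ L * (A * (1 / 2) ^ n * Real.exp (2 * κ * s) * C) :=
                mul_le_mul (hL s hsT _) (hvel s hsT _) (norm_nonneg _) hL0
            _ = _ := by rw [hκ]; ring)
        (right_mem_Icc.2 ht.1)
      exact this
  ext1 y
  have hlim : Tendsto (fun n : ℕ => A * (1 / 2 : ℝ) ^ n * Real.exp (2 * κ * t)) atTop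
      (𝓝 (A * 0 * Real.exp (2 * κ * t))) :=
    ((tendsto_pow_atTop_nhds_zero_of_lt_one (by norm_num) (by norm_num)).const_mul A).mul_const _
  have h0 := ge_of_tendsto' hlim fun n => key n t ht y
  simp only [mul_zero, zero_mul] at h0
  exact sub_eq_zero.1 (abs_nonpos_iff.1 h0)

/-! ### Reflection symmetry -/

/-- The reflection of the plane that changes the sign of the `i`-th coordinate, as a linear
isometry. -/
def reflIso (i : Fin 2) : Plane ≃ₗᵢ[ℝ] Plane :=
  LinearIsometryEquiv.piLpCongrRight 2 fun j =>
    if j = i then LinearIsometryEquiv.neg ℝ else LinearIsometryEquiv.refl ℝ ℝ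

lemma reflIso_self (i : Fin 2) (x : Plane) : reflIso i x i = -x i := by
  simp [reflIso]

lemma reflIso_of_ne {i j : Fin 2} (h : j ≠ i) (x : Plane) : reflIso i x j = x j := by
  simp [reflIso, h]

lemma reflIso_reflIso (i : Fin 2) (x : Plane) : reflIso i (reflIso i x) = x := by
  ext j
  rcases eq_or_ne j i with rfl | h
  · simp [reflIso_self]
  · simp [reflIso_of_ne h]

lemma refl1_eq (x : Plane) : refl1 x = reflIso 0 x := by
  apply plane_eq_of_coord
  · simp [refl1, reflIso_self]
  · simp [refl1, reflIso_of_ne]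

lemma refl2_eq (x : Plane) : refl2 x = reflIso 1 x := by
  apply plane_eq_of_coord
  · simp [refl2, reflIso_of_ne]
  · simp [refl2, reflIso_self]

lemma kernel_reflIso (i : Fin 2) (x : Plane) :
    biotSavartK (reflIso i x) = -reflIso i (biotSavartK x) := by
  have h0 : reflIso 0 x 1 = x 1 := reflIso_of_ne (by decide) x
  have h1 : reflIso 1 x 0 = x 0 := reflIso_of_ne (by decide) x
  have k0 : reflIso 0 (biotSavartK x) 1 = biotSavartK x 1 := reflIso_of_ne (by decide) _
  have k1 : reflIso 1 (biotSavartK x) 0 = biotSavartK x 0 := reflIso_of_ne (by decide) _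
  apply plane_eq_of_coord
  · rw [kernel_zero, PiLp.neg_apply, LinearIsometryEquiv.norm_map]
    fin_cases i
    · simp only [Fin.zero_eta, h0, reflIso_self, kernel_zero]; ring
    · simp only [Fin.mk_one, k1, reflIso_self, kernel_zero]; ring
  · rw [kernel_one, PiLp.neg_apply, LinearIsometryEquiv.norm_map]
    fin_cases i
    · simp only [Fin.zero_eta, k0, reflIso_self, kernel_one]; ring
    · simp only [Fin.mk_one, h1, reflIso_self, kernel_one]; ring

lemma vel_reflIso (i : Fin 2) (f : Plane → ℝ) (x : Plane) :
    vel (fun y => -f (reflIso i y)) x = reflIso i (vel f (reflIso i x)) := by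
  have h := (reflIso i).measurePreserving.integral_comp
    (reflIso i).toHomeomorph.measurableEmbedding
    (fun y => -f y • biotSavartK (x - reflIso i y))
  simp only [reflIso_reflIso] at h
  simp only [vel]
  rw [h]
  refine Eq.trans ?_ ((reflIso i).toLinearIsometry.integral_comp_comm _)
  refine integral_congr_ae (ae_of_all _ fun y => ?_)
  have : x - reflIso i y = reflIso i (reflIso i x - y) := by
    rw [map_sub, reflIso_reflIso]
  simp only
  rw [this, kernel_reflIso]
  simp

/-- Reflecting a solution, and changing the sign of its vorticity, gives a solution. -/
lemma EulerFlow.reflect {g ω φ} (hF : EulerFlow g ω φ) {i : Fin 2}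
    (hodd : ∀ x, g (reflIso i x) = -g x) :
    EulerFlow g (fun t x => -ω t (reflIso i x)) (fun t x => reflIso i (φ t (reflIso i x))) where
  smooth_vort := by
    have h : ContDiff ℝ (⊤ : ℕ∞) fun p : ℝ × Plane => (p.1, reflIso i p.2) :=
      contDiff_fst.prodMk ((reflIso i).contDiff.comp contDiff_snd)
    exact (hF.smooth_vort.comp h).neg
  init_vort := by
    ext1 x
    rw [hF.init_vort, hodd, neg_neg]
  euler t x := by
    rw [vel_reflIso]
    refine (hF.euler t (reflIso i x)).neg.congr_deriv ?_
    have h1 : HasFDerivAt (fun y => -ω t (reflIso i y))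
        (-((fderiv ℝ (ω t) (reflIso i x)).comp
          (reflIso i).toContinuousLinearEquiv.toContinuousLinearMap)) x :=
      ((((contDiff_slice hF.smooth_vort t).differentiable (by simp) _).hasFDerivAt).comp x
        (reflIso i).toContinuousLinearEquiv.hasFDerivAt).neg
    rw [h1.fderiv]
    have h2 : reflIso i (reflIso i (vel (ω t) (reflIso i x))) = vel (ω t) (reflIso i x) :=
      reflIso_reflIso _ _
    simp [h2]
  smooth_flow := by
    have h : ContDiff ℝ (⊤ : ℕ∞) fun p : ℝ × Plane => (p.1, reflIso i p.2) :=
      contDiff_fst.prodMk ((reflIso i).contDiff.comp contDiff_snd)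
    exact (reflIso i).contDiff.comp (hF.smooth_flow.comp h)
  init_flow x := by rw [hF.init_flow, reflIso_reflIso]
  ode t x := by
    rw [vel_reflIso, reflIso_reflIso]
    exact ((reflIso i).toContinuousLinearEquiv.hasFDerivAt).comp_hasDerivAt t
      (hF.ode t (reflIso i x))

section Symmetry

variable {g : Plane → ℝ} {ω : ℝ → Plane → ℝ} {φ : ℝ → Plane → Plane} {T : ℝ} {i : Fin 2}

/-- The vorticity stays odd: it coincides with its reflected negative by uniqueness. -/
lemma vort_odd (hF : EulerFlow g ω φ) (hgc : HasCompactSupport g)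
    (hs : ∀ t ∈ Icc 0 T, Function.Surjective (φ t)) (hodd : ∀ x, g (reflIso i x) = -g x)
    {t : ℝ} (ht : t ∈ Icc 0 T) (x : Plane) : ω t (reflIso i x) = -ω t x := by
  have h : ω t x = -ω t (reflIso i x) :=
    congrFun (euler_unique hF (hF.reflect hodd) hgc hs
      (fun t ht => (reflIso i).surjective.comp ((hs t ht).comp (reflIso i).surjective)) ht) x
  rw [h, neg_neg]

lemma flow_reflIso (hF : EulerFlow g ω φ) (hgc : HasCompactSupport g)
    (hs : ∀ t ∈ Icc 0 T, Function.Surjective (φ t)) (hodd : ∀ x, g (reflIso i x) = -g x)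
    {t : ℝ} (ht : t ∈ Icc 0 T) (x : Plane) : φ t (reflIso i x) = reflIso i (φ t x) := by
  obtain ⟨R, hR⟩ := exists_support_radius hF hgc hs
  obtain ⟨Λ, hΛ⟩ := exists_vel_lipschitz hF hR
  have hr : ∀ s ∈ Icc 0 T,
      HasDerivAt (fun s => reflIso i (φ s x)) (vel (ω s) (reflIso i (φ s x))) s := by
    intro s hs'
    have h1 := ((reflIso i).toContinuousLinearEquiv.hasFDerivAt).comp_hasDerivAt s (hF.ode s x)
    have h2 : vel (ω s) (reflIso i (φ s x)) = reflIso i (vel (ω s) (φ s x)) := by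
      have h3 : (fun y => -ω s (reflIso i y)) = ω s := by
        ext1 y; rw [vort_odd hF hgc hs hodd hs', neg_neg]
      have := vel_reflIso i (ω s) (reflIso i (φ s x))
      rwa [h3, reflIso_reflIso] at this
    rw [h2]
    exact h1
  have := ODE_solution_unique_of_mem_Icc_right (v := fun s => vel (ω s)) (s := fun _ => univ)
    (K := Λ) (a := 0) (b := t)
    (fun s hs => (hΛ s ⟨hs.1, hs.2.le.trans ht.2⟩).lipschitzOnWith)
    (fun s _ => (hF.ode s (reflIso i x)).continuousAt.continuousWithinAt)
    (fun s _ => (hF.ode s (reflIso i x)).hasDerivWithinAt) (fun _ _ => mem_univ _)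
    (fun s hs => (hr s ⟨hs.1, hs.2.trans ht.2⟩).continuousAt.continuousWithinAt)
    (fun s hs => (hr s ⟨hs.1, hs.2.le.trans ht.2⟩).hasDerivWithinAt) (fun _ _ => mem_univ _)
    (by simp [hF.init_flow])
  exact this ⟨ht.1, le_rfl⟩

lemma reflIso_eq_self_iff (x : Plane) : reflIso i x = x ↔ x i = 0 := by
  constructor
  · intro h
    have := congrArg (fun z : Plane => z i) h
    simp only [reflIso_self] at this
    linarith
  · intro h
    ext j
    rcases eq_or_ne j i with rfl | hj
    · rw [reflIso_self, h, neg_zero]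
    · rw [reflIso_of_ne hj]

lemma flow_coord_eq_zero_iff (hF : EulerFlow g ω φ) (hgc : HasCompactSupport g)
    (hs : ∀ t ∈ Icc 0 T, Function.Surjective (φ t)) (hodd : ∀ x, g (reflIso i x) = -g x)
    {t : ℝ} (ht : t ∈ Icc 0 T) (x : Plane) : φ t x i = 0 ↔ x i = 0 := by
  obtain ⟨R, hR⟩ := exists_support_radius hF hgc hs
  rw [← reflIso_eq_self_iff, ← reflIso_eq_self_iff (i := i) x, ← flow_reflIso hF hgc hs hodd ht]
  exact (flow_injective hF hR ht).eq_iff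

lemma flow_coord_pos (hF : EulerFlow g ω φ) (hgc : HasCompactSupport g)
    (hs : ∀ t ∈ Icc 0 T, Function.Surjective (φ t)) (hodd : ∀ x, g (reflIso i x) = -g x)
    {t : ℝ} (ht : t ∈ Icc 0 T) {x : Plane} (hx : 0 < x i) : 0 < φ t x i := by
  by_contra! hle
  have hc : ContinuousOn (fun s => φ s x i) (Icc 0 t) := by
    have : Continuous fun s => φ s x :=
      continuous_iff_continuousAt.2 fun s => (hF.ode s x).continuousAt
    fun_prop
  obtain ⟨s, hs', h0⟩ := intermediate_value_Icc' ht.1 hc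
    (show (0 : ℝ) ∈ Icc (φ t x i) (φ 0 x i) from ⟨hle, by rw [hF.init_flow]; exact hx.le⟩)
  exact hx.ne' ((flow_coord_eq_zero_iff hF hgc hs hodd ⟨hs'.1, hs'.2.trans ht.2⟩ x).1 h0)

end Symmetry

/-! ### The strain rate at the origin -/

/-- A Lipschitz function that is odd in `y₂` vanishes linearly on the axis `y₂ = 0`. -/
lemma exists_bound_coord_one {f : Plane → ℝ} (hf : ContDiff ℝ 1 f) (hc : HasCompactSupport f)
    (hodd : ∀ y, f (reflIso 1 y) = -f y) : ∃ L, 0 ≤ L ∧ ∀ y, |f y| ≤ L * |y 1| := by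
  obtain ⟨L, hL⟩ := hf.lipschitzWith_of_hasCompactSupport hc (by simp)
  refine ⟨L, L.2, fun y => ?_⟩
  set z : Plane := y - y 1 • EuclideanSpace.single 1 (1 : ℝ) with hz
  have hz0 : f z = 0 := by
    have h1 : reflIso 1 z = z := (reflIso_eq_self_iff z).2 (by simp [hz])
    have := hodd z
    rw [h1] at this
    linarith
  have := hL.dist_le_mul y z
  rw [dist_eq_norm, hz0, sub_zero, dist_eq_norm, hz, sub_sub_cancel, norm_smul] at this
  simpa using this

lemma integrable_bound_kernel (L R : ℝ) : Integrable
    ((Metric.closedBall (0 : Plane) R).indicator fun y => 2 * L * ‖biotSavartK y‖) := by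
  rw [integrable_indicator_iff Metric.isClosed_closedBall.measurableSet]
  exact ((locallyIntegrable_kernel.integrableOn_isCompact
    (isCompact_closedBall (0 : Plane) R)).norm).const_mul _

/-- The integrand of the strain rate at the origin is absolutely integrable. -/
lemma integrable_strain {f : Plane → ℝ} (hf : ContDiff ℝ 1 f) (hc : HasCompactSupport f)
    (hodd : ∀ y, f (reflIso 1 y) = -f y) :
    Integrable fun y : Plane => f y * (y 0 * y 1) / ‖y‖ ^ 4 := by
  obtain ⟨L, hL0, hL⟩ := exists_bound_coord_one hf hc hodd
  obtain ⟨R, hR⟩ := hc.isBounded.subset_closedBall (0 : Plane)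
  refine Integrable.mono' (integrable_bound_kernel (π * L) R) ?_ (ae_of_all _ fun y => ?_)
  · have := hf.continuous.measurable
    exact Measurable.aestronglyMeasurable (by fun_prop)
  · by_cases hy : y ∈ Metric.closedBall (0 : Plane) R
    swap
    · rw [indicator_of_notMem hy, image_eq_zero_of_notMem_tsupport fun h => hy (hR h)]
      simp
    rw [indicator_of_mem hy, norm_kernel]
    rcases eq_or_ne y 0 with rfl | hy0
    · simp
    have hp : 0 < ‖y‖ := norm_pos_iff.2 hy0
    have h0 := abs_coord_le y 0
    have h1 := abs_coord_le y 1
    rw [Real.norm_eq_abs, abs_div, abs_mul, abs_mul, abs_of_pos (by positivity : 0 < ‖y‖ ^ 4)]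
    calc |f y| * (|y 0| * |y 1|) / ‖y‖ ^ 4 ≤ (L * ‖y‖) * (‖y‖ * ‖y‖) / ‖y‖ ^ 4 := by
          gcongr
          exact (hL y).trans (by gcongr)
      _ = 2 * (π * L) * (1 / (2 * π * ‖y‖)) := by field_simp

/-- The strain rate at the origin. Since `f` vanishes on the axis `y₂ = 0`, the difference quotients
of the horizontal velocity along this axis are dominated by a multiple of `1/|y|`. -/
lemma hasDerivAt_vel_axis {f : Plane → ℝ} (hf : ContDiff ℝ 1 f) (hc : HasCompactSupport f)
    (hodd : ∀ y, f (reflIso 1 y) = -f y) :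
    HasDerivAt (fun h : ℝ => vel f (h • EuclideanSpace.single 0 (1 : ℝ)) 0)
      (1 / π * ∫ y : Plane, f y * (y 0 * y 1) / ‖y‖ ^ 4) 0 := by
  obtain ⟨L, hL0, hL⟩ := exists_bound_coord_one hf hc hodd
  obtain ⟨R, hR⟩ := hc.isBounded.subset_closedBall (0 : Plane)
  set e : Plane := EuclideanSpace.single 0 (1 : ℝ) with he
  have hintg : ∀ x, Integrable fun y => (f y • biotSavartK (x - y)) 0 := fun x =>
    (EuclideanSpace.proj (𝕜 := ℝ) (0 : Fin 2) : Plane →L[ℝ] ℝ).integrable_comp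
      (integrable_vel hf.continuous hc x)
  have hvel : ∀ x, vel f x 0 = ∫ y, (f y • biotSavartK (x - y)) 0 := fun x =>
    ((EuclideanSpace.proj (𝕜 := ℝ) (0 : Fin 2) : Plane →L[ℝ] ℝ).integral_comp_comm
      (integrable_vel hf.continuous hc x)).symm
  set Q : ℝ → Plane → ℝ := fun h y =>
    h⁻¹ * ((f y • biotSavartK (h • e - y)) 0 - (f y • biotSavartK ((0 : ℝ) • e - y)) 0) with hQ
  have hQint : ∀ h, Integrable (Q h) := fun h => ((hintg _).sub (hintg _)).const_mul _
  -- off the axis the difference quotient is an explicit rational function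
  have hQeq : ∀ h ≠ 0, ∀ y : Plane, y 1 ≠ 0 → Q h y =
      f y * y 1 * (2 * y 0 - h) / (2 * π * (y 0 ^ 2 + y 1 ^ 2) * ((h - y 0) ^ 2 + y 1 ^ 2)) := by
    intro h hh y hy
    have p1 : 0 < y 0 ^ 2 + y 1 ^ 2 := by positivity
    have p2 : 0 < (h - y 0) ^ 2 + y 1 ^ 2 := by positivity
    simp only [hQ, PiLp.smul_apply, smul_eq_mul, kernel_zero, plane_norm_sq]
    simp only [he, PiLp.sub_apply, PiLp.smul_apply, smul_eq_mul, PiLp.single_apply]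
    norm_num
    have p3 : 0 < y 0 ^ 2 + y 1 ^ 2 := p1
    field_simp
    ring
  have hQ0 : ∀ h, ∀ y : Plane, y 1 = 0 → Q h y = 0 := by
    intro h y hy
    have : f y = 0 := abs_nonpos_iff.1 ((hL y).trans (by simp [hy]))
    simp [hQ, this]
  rw [hasDerivAt_iff_tendsto_slope, ← integral_const_mul]
  have hslope : slope (fun h : ℝ => vel f (h • e) 0) 0 = fun h => ∫ y, Q h y := by
    ext1 h
    rw [slope_def_field, hvel, hvel, ← integral_sub (hintg _) (hintg _), div_eq_inv_mul,
      ← integral_const_mul, sub_zero]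
  rw [hslope]
  refine tendsto_integral_filter_of_dominated_convergence _ (Eventually.of_forall fun h =>
    (hQint h).aestronglyMeasurable) ?_ (integrable_bound_kernel L R) (ae_of_all _ fun y => ?_)
  · filter_upwards [self_mem_nhdsWithin] with h hh
    refine ae_of_all _ fun y => ?_
    by_cases hy : y ∈ Metric.closedBall (0 : Plane) R
    swap
    · have : f y = 0 := image_eq_zero_of_notMem_tsupport fun h => hy (hR h)
      rw [indicator_of_notMem hy]
      simp [hQ, this]
    rw [indicator_of_mem hy]
    by_cases hy1 : y 1 = 0
    · rw [hQ0 h y hy1, norm_zero]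
      positivity
    rw [hQeq h hh y hy1, norm_kernel]
    set r := ‖y‖ with hr
    set d := √((h - y 0) ^ 2 + y 1 ^ 2) with hd
    have hr2 : y 0 ^ 2 + y 1 ^ 2 = r ^ 2 := (plane_norm_sq y).symm
    have hd2 : (h - y 0) ^ 2 + y 1 ^ 2 = d ^ 2 := (Real.sq_sqrt (by positivity)).symm
    have hb : 0 < |y 1| := abs_pos.2 hy1
    have hbr : |y 1| ≤ r := abs_coord_le y 1
    have har : |y 0| ≤ r := abs_coord_le y 0
    have hbd : |y 1| ≤ d := Real.abs_le_sqrt (by nlinarith [sq_nonneg (h - y 0)])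
    have had : |h - y 0| ≤ d := Real.abs_le_sqrt (by nlinarith [sq_nonneg (y 1)])
    have hr0 : 0 < r := hb.trans_le hbr
    have hd0 : 0 < d := hb.trans_le hbd
    have hn : |2 * y 0 - h| ≤ r + d := by
      rw [show 2 * y 0 - h = y 0 - (h - y 0) by ring]
      exact (abs_sub _ _).trans (add_le_add har had)
    rw [hr2, hd2, Real.norm_eq_abs, abs_div, abs_mul, abs_mul,
      abs_of_pos (by positivity : 0 < 2 * π * r ^ 2 * d ^ 2)]
    have hf1 : |f y| * |y 1| * |2 * y 0 - h| ≤ L * |y 1| * |y 1| * (r + d) := by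
      gcongr
      exact hL y
    have hf2 : |y 1| * |y 1| * (r + d) ≤ 2 * (r * d ^ 2) := by
      have s1 : |y 1| * |y 1| * r ≤ d * d * r := by gcongr
      have s2 : |y 1| * |y 1| * d ≤ r * d * d := by gcongr
      nlinarith
    calc |f y| * |y 1| * |2 * y 0 - h| / (2 * π * r ^ 2 * d ^ 2)
        ≤ L * (2 * (r * d ^ 2)) / (2 * π * r ^ 2 * d ^ 2) := by
          refine div_le_div_of_nonneg_right ?_ (by positivity)
          calc _ ≤ _ := hf1
            _ = L * (|y 1| * |y 1| * (r + d)) := by ring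
            _ ≤ _ := by gcongr
      _ = 2 * L * (1 / (2 * π * r)) := by field_simp
  · by_cases hy1 : y 1 = 0
    · have h1 : ∀ h, Q h y = 0 := fun h => hQ0 h y hy1
      simp only [h1, hy1, mul_zero, zero_div]
      exact tendsto_const_nhds
    have p1 : 0 < y 0 ^ 2 + y 1 ^ 2 := by positivity
    have hcont : ContinuousAt (fun h : ℝ => f y * y 1 * (2 * y 0 - h) /
        (2 * π * (y 0 ^ 2 + y 1 ^ 2) * ((h - y 0) ^ 2 + y 1 ^ 2))) 0 := by
      refine ContinuousAt.div (by fun_prop) (by fun_prop) ?_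
      have : 0 < (0 - y 0) ^ 2 + y 1 ^ 2 := by positivity
      positivity
    have hlim := hcont.tendsto.mono_left (nhdsWithin_le_nhds (s := {0}ᶜ))
    have hval : f y * y 1 * (2 * y 0 - 0) /
        (2 * π * (y 0 ^ 2 + y 1 ^ 2) * ((0 - y 0) ^ 2 + y 1 ^ 2)) =
        1 / π * (f y * (y 0 * y 1) / ‖y‖ ^ 4) := by
      rw [show ‖y‖ ^ 4 = (‖y‖ ^ 2) ^ 2 by ring, plane_norm_sq,
        show (0 - y 0) ^ 2 + y 1 ^ 2 = y 0 ^ 2 + y 1 ^ 2 by ring]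
      field_simp
      ring
    rw [hval] at hlim
    refine hlim.congr' ?_
    filter_upwards [self_mem_nhdsWithin] with h hh
    exact (hQeq h hh y hy1).symm

/-! ### Lower bound for the strain rate -/

/-- If `F` preserves the line `xᵢ = 0` and `∂ᵢFᵢ` is bounded by `M`, then `|Fᵢ(x)| ≤ M |xᵢ|`, by the
mean value inequality on the segment from `x` to its projection onto that line. -/
lemma abs_coord_le_of_fderiv {F : Plane → Plane} {F' : Plane → Plane →L[ℝ] Plane} {i : Fin 2}
    {M : ℝ} (hF : ∀ x, HasFDerivAt F (F' x) x) (h0 : ∀ x : Plane, x i = 0 → F x i = 0)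
    (hM : ∀ x, |F' x (EuclideanSpace.single i 1) i| ≤ M) (x : Plane) : |F x i| ≤ M * |x i| := by
  set e : Plane := EuclideanSpace.single i 1 with he
  have hline : ∀ s : ℝ, HasDerivAt (fun s : ℝ => x + s • e) e s := fun s => by
    simpa using ((hasDerivAt_id s).smul_const e).const_add x
  have hd : ∀ s : ℝ, HasDerivAt (fun s => F (x + s • e) i) (F' (x + s • e) e i) s := fun s =>
    ((EuclideanSpace.proj i : Plane →L[ℝ] ℝ).hasFDerivAt.comp _
      (hF (x + s • e))).comp_hasDerivAt (f := fun s : ℝ => x + s • e) s (hline s)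
  have := convex_univ.norm_image_sub_le_of_norm_hasDerivWithin_le (x := -x i) (y := 0)
    (fun s _ => (hd s).hasDerivWithinAt) (fun s _ => hM (x + s • e)) (mem_univ _) (mem_univ _)
  rw [h0 (x + (-x i) • e) (by simp [he])] at this
  simpa using this

/-- The inverse of the flow satisfies the same bounds on the diagonal entries of its Jacobian matrix:
as the determinant is one, that matrix is the adjugate of the Jacobian matrix of the flow. -/
lemma exists_flow_inverse {g ω φ} (hF : EulerFlow g ω φ) {t M : ℝ} (hb : Function.Bijective (φ t))
    (hM : ∀ (x : Plane) (i j : Fin 2), |fderiv ℝ (φ t) x (EuclideanSpace.single j 1) i| ≤ M) :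
    ∃ (ψ : Plane → Plane) (ψ' : Plane → Plane →L[ℝ] Plane), (∀ x, ψ (φ t x) = x) ∧
      (∀ y, φ t (ψ y) = y) ∧ (∀ y, HasFDerivAt ψ (ψ' y) y) ∧
      ∀ y (i : Fin 2), |ψ' y (EuclideanSpace.single i 1) i| ≤ M := by
  have hsm := contDiff_slice hF.smooth_flow t
  have hdet : ∀ x, (fderiv ℝ (φ t) x).det ≠ 0 := fun x => by
    rw [det_fderiv_flow hF]; exact one_ne_zero
  set D : Plane → Plane ≃L[ℝ] Plane := fun x =>
    (fderiv ℝ (φ t) x).toContinuousLinearEquivOfDetNeZero (hdet x) with hD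
  have hDc : ∀ x, ((D x : Plane ≃L[ℝ] Plane) : Plane →L[ℝ] Plane) = fderiv ℝ (φ t) x := fun x => by
    ext1 v; rfl
  have hopen : IsOpenMap (φ t) := isOpenMap_of_hasStrictFDerivAt_equiv (𝕜 := ℝ) (f' := D) fun x => by
    rw [hDc]; exact hsm.contDiffAt.hasStrictFDerivAt (by simp)
  set Φ := (Equiv.ofBijective _ hb).toHomeomorphOfContinuousOpen hsm.continuous hopen with hΦ
  have hl : ∀ x, Φ.symm (φ t x) = x := fun x => Φ.symm_apply_apply x
  have hr : ∀ y, φ t (Φ.symm y) = y := fun y => Φ.apply_symm_apply y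
  refine ⟨Φ.symm, fun y => (D (Φ.symm y)).symm, hl, hr, fun y => ?_, fun y i => ?_⟩
  · refine HasFDerivAt.of_local_left_inverse Φ.symm.continuous.continuousAt (f := φ t) ?_
      (Eventually.of_forall hr)
    rw [hDc]
    exact (hsm.differentiable (by simp) _).hasFDerivAt
  · set x := Φ.symm y
    have hdet1 := det_fderiv_flow hF t x
    rw [plane_det] at hdet1
    set A := fderiv ℝ (φ t) x with hA
    set e : Fin 2 → Plane := fun i => EuclideanSpace.single i 1 with he
    have hsol : ∀ v w : Plane, A v = w → (D x).symm w = v := fun v w h =>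
      (D x).symm_apply_eq.2 h.symm
    fin_cases i
    · have h1 : (D x).symm (e 0) = A (e 1) 1 • e 0 - A (e 0) 1 • e 1 := by
        apply hsol
        apply plane_eq_of_coord
        · simp only [map_sub, map_smul, PiLp.sub_apply, PiLp.smul_apply, smul_eq_mul, he]
          simp
          linarith
        · simp only [map_sub, map_smul, PiLp.sub_apply, PiLp.smul_apply, smul_eq_mul, he]
          simp
          ring
      change |(D x).symm (e 0) 0| ≤ M
      rw [h1]
      simpa [he] using hM x 1 1
    · have h1 : (D x).symm (e 1) = A (e 0) 0 • e 1 - A (e 1) 0 • e 0 := by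
        apply hsol
        apply plane_eq_of_coord
        · simp only [map_sub, map_smul, PiLp.sub_apply, PiLp.smul_apply, smul_eq_mul, he]
          simp
          ring
        · simp only [map_sub, map_smul, PiLp.sub_apply, PiLp.smul_apply, smul_eq_mul, he]
          simp
          linarith
      change |(D x).symm (e 1) 1| ≤ M
      rw [h1]
      simpa [he] using hM x 0 0

/-- The function `ab/(a²+b²)²` decreases at most by the factor `M⁴` when both variables are
multiplied by factors in `[1/M, M]`. -/
lemma strain_density_le {a b p q M : ℝ} (hM : 0 < M) (ha : 0 < a) (hb : 0 < b) (hp : 0 < p)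
    (hq : 0 < q) (hpa : p ≤ M * a) (hap : a ≤ M * p) (hqb : q ≤ M * b) (hbq : b ≤ M * q) :
    1 / M ^ 4 * (a * b / (a ^ 2 + b ^ 2) ^ 2) ≤ p * q / (p ^ 2 + q ^ 2) ^ 2 := by
  obtain ⟨α, rfl⟩ : ∃ α, p = α * a := ⟨p / a, by field_simp⟩
  obtain ⟨β, rfl⟩ : ∃ β, q = β * b := ⟨q / b, by field_simp⟩
  have hα : 0 < α := pos_of_mul_pos_left hp ha.le
  have hβ : 0 < β := pos_of_mul_pos_left hq hb.le
  have hα1 : α ≤ M := le_of_mul_le_mul_right hpa ha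
  have hβ1 : β ≤ M := le_of_mul_le_mul_right hqb hb
  have hα2 : 1 ≤ M * α := le_of_mul_le_mul_right (by linarith) ha
  have hβ2 : 1 ≤ M * β := le_of_mul_le_mul_right (by linarith) hb
  -- for `β ≤ α` one has `α⁴ ≤ α M³ ≤ α M³ (M β)`
  have aux : ∀ {α β : ℝ}, 0 < α → α ≤ M → 1 ≤ M * β → α ^ 4 ≤ M ^ 4 * (α * β) := by
    intro α β h1 h2 h3
    calc α ^ 4 = α * α ^ 3 := by ring
      _ ≤ α * M ^ 3 := by gcongr
      _ = α * M ^ 3 * 1 := by ring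
      _ ≤ α * M ^ 3 * (M * β) := by gcongr
      _ = M ^ 4 * (α * β) := by ring
  have key : ((α * a) ^ 2 + (β * b) ^ 2) ^ 2 ≤ M ^ 4 * (α * β) * (a ^ 2 + b ^ 2) ^ 2 := by
    rcases le_total β α with h | h
    · calc ((α * a) ^ 2 + (β * b) ^ 2) ^ 2 ≤ ((α * a) ^ 2 + (α * b) ^ 2) ^ 2 := by gcongr
        _ = α ^ 4 * (a ^ 2 + b ^ 2) ^ 2 := by ring
        _ ≤ _ := by gcongr; exact aux hα hα1 hβ2
    · calc ((α * a) ^ 2 + (β * b) ^ 2) ^ 2 ≤ ((β * a) ^ 2 + (β * b) ^ 2) ^ 2 := by gcongr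
        _ = β ^ 4 * (a ^ 2 + b ^ 2) ^ 2 := by ring
        _ ≤ _ := by
          gcongr
          rw [mul_comm α β]
          exact aux hβ hβ1 hα2
  rw [one_div_mul_eq_div, div_div, div_le_div_iff₀ (by positivity) (by positivity)]
  calc a * b * ((α * a) ^ 2 + (β * b) ^ 2) ^ 2
      ≤ a * b * (M ^ 4 * (α * β) * (a ^ 2 + b ^ 2) ^ 2) := by gcongr
    _ = _ := by ring

section Strain

variable {g : Plane → ℝ} {ω : ℝ → Plane → ℝ} {φ : ℝ → Plane → Plane} {T : ℝ}

/-- The pointwise comparison of the strain densities; by symmetry it is enough to treat the first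
quadrant, and on the coordinate axes both sides vanish. -/
lemma flow_strain_density (hF : EulerFlow g ω φ) (hgc : HasCompactSupport g)
    (hs : ∀ t ∈ Icc 0 T, Function.Surjective (φ t)) (hodd : ∀ i x, g (reflIso i x) = -g x)
    (hpos : ∀ x : Plane, 0 ≤ x 0 → 0 ≤ x 1 → 0 ≤ g x) {t M : ℝ} (ht : t ∈ Icc 0 T) (hM0 : 0 < M)
    (hM : ∀ (x : Plane) (i j : Fin 2), |fderiv ℝ (φ t) x (EuclideanSpace.single j 1) i| ≤ M)
    (x : Plane) : 1 / M ^ 4 * (g x * (x 0 * x 1) / ‖x‖ ^ 4) ≤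
      g x * (φ t x 0 * φ t x 1) / ‖φ t x‖ ^ 4 := by
  obtain ⟨R, hR⟩ := exists_support_radius hF hgc hs
  obtain ⟨ψ, ψ', hl, hr, hψ, hψM⟩ := exists_flow_inverse hF ⟨flow_injective hF hR ht, hs t ht⟩ hM
  have hz : ∀ (x : Plane) i, φ t x i = 0 ↔ x i = 0 := fun x i =>
    flow_coord_eq_zero_iff hF hgc hs (hodd i) ht x
  have hup : ∀ (x : Plane) i, |φ t x i| ≤ M * |x i| := fun x i =>
    abs_coord_le_of_fderiv (fun x => ((contDiff_slice hF.smooth_flow t).differentiable (by simp)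
      x).hasFDerivAt) (fun x => (hz x i).2) (fun x => hM x i i) x
  -- the same bound for the inverse map, evaluated at `φ t x`
  have hlo : ∀ (x : Plane) i, |x i| ≤ M * |φ t x i| := fun x i => by
    have := abs_coord_le_of_fderiv hψ (fun y hy => (hz (ψ y) i).1 (by rwa [hr]))
      (fun y => hψM y i) (φ t x)
    rwa [hl] at this
  have hquad : ∀ x : Plane, 0 ≤ x 0 → 0 ≤ x 1 → 1 / M ^ 4 * (g x * (x 0 * x 1) / ‖x‖ ^ 4) ≤
      g x * (φ t x 0 * φ t x 1) / ‖φ t x‖ ^ 4 := by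
    intro x h0 h1
    rcases h0.eq_or_lt with h0' | h0'
    · rw [(hz x 0).2 h0'.symm, ← h0']; simp
    rcases h1.eq_or_lt with h1' | h1'
    · rw [(hz x 1).2 h1'.symm, ← h1']; simp
    have p0 := flow_coord_pos hF hgc hs (hodd 0) ht h0'
    have p1 := flow_coord_pos hF hgc hs (hodd 1) ht h1'
    have u0 := hup x 0
    have u1 := hup x 1
    have l0 := hlo x 0
    have l1 := hlo x 1
    rw [abs_of_pos p0, abs_of_pos h0'] at u0 l0
    rw [abs_of_pos p1, abs_of_pos h1'] at u1 l1
    have := mul_le_mul_of_nonneg_left (strain_density_le hM0 h0' h1' p0 p1 u0 l0 u1 l1)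
      (hpos x h0 h1)
    rw [show ‖x‖ ^ 4 = (‖x‖ ^ 2) ^ 2 by ring, show ‖φ t x‖ ^ 4 = (‖φ t x‖ ^ 2) ^ 2 by ring,
      plane_norm_sq, plane_norm_sq]
    calc _ = _ := by ring
      _ ≤ _ := this
      _ = _ := by ring
  have href : ∀ i (x : Plane), 1 / M ^ 4 * (g (reflIso i x) * (reflIso i x 0 * reflIso i x 1) /
      ‖reflIso i x‖ ^ 4) ≤ g (reflIso i x) * (φ t (reflIso i x) 0 * φ t (reflIso i x) 1) /
        ‖φ t (reflIso i x)‖ ^ 4 → 1 / M ^ 4 * (g x * (x 0 * x 1) / ‖x‖ ^ 4) ≤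
      g x * (φ t x 0 * φ t x 1) / ‖φ t x‖ ^ 4 := by
    intro i x h
    rw [flow_reflIso hF hgc hs (hodd i) ht, hodd i, LinearIsometryEquiv.norm_map,
      LinearIsometryEquiv.norm_map] at h
    have hprod : ∀ z : Plane, reflIso i z 0 * reflIso i z 1 = -(z 0 * z 1) := by
      intro z
      fin_cases i
      · have : reflIso 0 z 1 = z 1 := reflIso_of_ne (by decide) z
        simp [reflIso_self, this]
      · have : reflIso 1 z 0 = z 0 := reflIso_of_ne (by decide) z
        simp [reflIso_self, this]
    rwa [hprod, hprod, neg_mul_neg, neg_mul_neg] at h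
  have hhalf : ∀ x : Plane, 0 ≤ x 1 → 1 / M ^ 4 * (g x * (x 0 * x 1) / ‖x‖ ^ 4) ≤
      g x * (φ t x 0 * φ t x 1) / ‖φ t x‖ ^ 4 := by
    intro x h1
    rcases le_total 0 (x 0) with h0 | h0
    · exact hquad x h0 h1
    · refine href 0 x (hquad _ ?_ ?_)
      · rw [reflIso_self]; linarith
      · rwa [reflIso_of_ne (by decide)]
  rcases le_total 0 (x 1) with h1 | h1
  · exact hhalf x h1
  · refine href 1 x (hhalf _ ?_)
    rw [reflIso_self]; linarith

/-- The lower bound for the strain rate at the origin. -/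
lemma strain_lower_bound (hF : EulerFlow g ω φ) (hgc : HasCompactSupport g)
    (hs : ∀ t ∈ Icc 0 T, Function.Surjective (φ t)) (hodd : ∀ i x, g (reflIso i x) = -g x)
    (hpos : ∀ x : Plane, 0 ≤ x 0 → 0 ≤ x 1 → 0 ≤ g x) {t M : ℝ} (ht : t ∈ Icc 0 T) (hM0 : 0 < M)
    (hM : ∀ (x : Plane) (i j : Fin 2), |fderiv ℝ (φ t) x (EuclideanSpace.single j 1) i| ≤ M) :
    1 / M ^ 4 * (∫ x : Plane, g x * (x 0 * x 1) / ‖x‖ ^ 4) ≤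
      ∫ y : Plane, ω t y * (y 0 * y 1) / ‖y‖ ^ 4 := by
  obtain ⟨R, hR⟩ := exists_support_radius hF hgc hs
  have hinj := flow_injective hF hR ht
  have hsm : ∀ t, ContDiff ℝ 1 (ω t) := fun t =>
    (contDiff_slice hF.smooth_vort t).of_le (by norm_cast)
  have hgi : Integrable fun x : Plane => g x * (x 0 * x 1) / ‖x‖ ^ 4 := by
    refine integrable_strain ?_ hgc (hodd 1)
    have := hsm 0
    rwa [hF.init_vort] at this
  have hωi : Integrable fun y : Plane => ω t y * (y 0 * y 1) / ‖y‖ ^ 4 :=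
    integrable_strain (hsm t) (hasCompactSupport_of_radius (hR t ht))
      fun y => vort_odd hF hgc hs (hodd 1) ht y
  have hd : ∀ x ∈ univ, HasFDerivWithinAt (φ t) (fderiv ℝ (φ t) x) univ x := fun x _ =>
    ((contDiff_slice hF.smooth_flow t).differentiable (by simp) x).hasFDerivAt.hasFDerivWithinAt
  have hi := (integrableOn_image_iff_integrableOn_abs_det_fderiv_smul volume MeasurableSet.univ hd
    hinj.injOn fun y : Plane => ω t y * (y 0 * y 1) / ‖y‖ ^ 4).1 hωi.integrableOn
  have he := integral_image_eq_integral_abs_det_fderiv_smul volume MeasurableSet.univ hd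
    hinj.injOn fun y : Plane => ω t y * (y 0 * y 1) / ‖y‖ ^ 4
  simp only [det_fderiv_flow hF, abs_one, one_smul, vort_transport hF, image_univ,
    (hs t ht).range_eq, Measure.restrict_univ, integrableOn_univ] at hi he
  rw [he, ← integral_const_mul]
  exact integral_mono (hgi.const_mul _) hi fun x =>
    flow_strain_density hF hgc hs hodd hpos ht hM0 hM x

end Strain

/-! ### Growth of the deformation -/

/-- A bound on the entries of `Dφ` cannot vanish, as the determinant is one. -/
lemma bound_pos {g ω φ} (hF : EulerFlow g ω φ) {t M : ℝ}
    (hM : ∀ (x : Plane) (i j : Fin 2), |fderiv ℝ (φ t) x (EuclideanSpace.single j 1) i| ≤ M) :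
    0 < M := by
  by_contra! h
  have hz : ∀ i j : Fin 2, fderiv ℝ (φ t) 0 (EuclideanSpace.single j 1) i = 0 := fun i j =>
    abs_nonpos_iff.1 ((hM 0 i j).trans h)
  have := det_fderiv_flow hF t 0
  rw [plane_det, hz, hz, hz, hz] at this
  simp at this

/-- The stretching factor `∂₁φ₁(t, 0)` grows at the rate given by the strain at the origin, because
both coordinate axes are invariant under the flow. -/
lemma hasDerivAt_stretch {g ω φ} (hF : EulerFlow g ω φ) (hgc : HasCompactSupport g) {T : ℝ}
    (hs : ∀ t ∈ Icc 0 T, Function.Surjective (φ t)) (hodd : ∀ i x, g (reflIso i x) = -g x)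
    {t : ℝ} (ht : t ∈ Icc 0 T) :
    HasDerivAt (fun s => fderiv ℝ (φ s) 0 (EuclideanSpace.single 0 1) 0)
      ((1 / π * ∫ y : Plane, ω t y * (y 0 * y 1) / ‖y‖ ^ 4) *
        fderiv ℝ (φ t) 0 (EuclideanSpace.single 0 1) 0) t := by
  obtain ⟨R, hR⟩ := exists_support_radius hF hgc hs
  have hsm : ContDiff ℝ 1 (ω t) := (contDiff_slice hF.smooth_vort t).of_le (by norm_cast)
  have hcs := hasCompactSupport_of_radius (hR t ht)
  set e : Plane := EuclideanSpace.single 0 1 with he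
  have hz : ∀ (x : Plane) i, x i = 0 → φ t x i = 0 := fun x i =>
    (flow_coord_eq_zero_iff hF hgc hs (hodd i) ht x).2
  have hφ0 : φ t 0 = 0 := plane_eq_of_coord (hz 0 0 rfl) (hz 0 1 rfl)
  have hD := ((contDiff_slice hF.smooth_flow t).differentiable (by simp) 0).hasFDerivAt
  set D := fderiv ℝ (φ t) 0 with hDdef
  obtain ⟨A, hA, -⟩ := hasFDerivAt_vel hsm hcs (φ t 0)
  have h1 := hasDerivAt_fderiv_slice hF.smooth_flow (hF.ode t) (hA.comp (0 : Plane) hD) e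
  have h2 : HasDerivAt (fun s => fderiv ℝ (φ s) 0 e 0) (A (D e) 0) t :=
    (EuclideanSpace.proj 0 : Plane →L[ℝ] ℝ).hasFDerivAt.comp_hasDerivAt t h1
  have hline : HasDerivAt (fun h : ℝ => h • e) e 0 := by
    simpa using (hasDerivAt_id (0 : ℝ)).smul_const e
  have hA0 : A e 0 = 1 / π * ∫ y : Plane, ω t y * (y 0 * y 1) / ‖y‖ ^ 4 := by
    have hA' : HasFDerivAt (vel (ω t)) A ((0 : ℝ) • e) := by
      rw [zero_smul, ← hφ0]; exact hA
    have h3 : HasDerivAt (fun h : ℝ => vel (ω t) (h • e) 0) (A e 0) 0 :=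
      ((EuclideanSpace.proj 0 : Plane →L[ℝ] ℝ).hasFDerivAt.comp _ hA').comp_hasDerivAt
        (f := fun h : ℝ => h • e) 0 hline
    exact h3.unique (hasDerivAt_vel_axis hsm hcs fun y => vort_odd hF hgc hs (hodd 1) ht y)
  have hD1 : D e 1 = 0 := by
    have hD' : HasFDerivAt (φ t) D ((0 : ℝ) • e) := by rw [zero_smul]; exact hD
    have h3 : HasDerivAt (fun h : ℝ => φ t (h • e) 1) (D e 1) 0 :=
      ((EuclideanSpace.proj 1 : Plane →L[ℝ] ℝ).hasFDerivAt.comp _ hD').comp_hasDerivAt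
        (f := fun h : ℝ => h • e) 0 hline
    have h4 : (fun h : ℝ => φ t (h • e) 1) = fun _ => 0 := by
      ext1 h
      exact hz _ _ (by simp [he])
    rw [h4] at h3
    exact h3.unique (hasDerivAt_const 0 0)
  refine h2.congr_deriv ?_
  rw [clm_apply_coord A (D e), hD1, ← hA0, zero_mul, add_zero, mul_comm]

/-- With `I(t) = ∫₀ᵗ M⁻⁴` and `c = B/π`, the stretching factor `p` at the origin satisfies
`p² ≥ exp(2cI)`, so that `exp(4cI) ≤ M⁴`. As `exp(4cI)` has derivative `4c M⁻⁴ exp(4cI) ≤ 4c`, it is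
at most `1 + 4ct`. -/
lemma integral_deformation_le {g ω φ} {B : ℝ} (hF : EulerFlow g ω φ) (hgc : HasCompactSupport g)
    (hodd : ∀ i x, g (reflIso i x) = -g x)
    (hpos : ∀ x : Plane, 0 ≤ x 0 → 0 ≤ x 1 → 0 ≤ g x)
    (hB : B = ∫ x : Plane, g x * (x 0 * x 1) / ‖x‖ ^ 4) (hBpos : 0 < B) {T : ℝ} (hT : 0 ≤ T)
    {M : ℝ → ℝ} (hMc : Continuous M) (hM0 : ∀ s, 0 < M s)
    (hM : ∀ s ∈ Icc 0 T, ∀ (x : Plane) (i j : Fin 2),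
      |fderiv ℝ (φ s) x (EuclideanSpace.single j 1) i| ≤ M s) :
    (∫ s in (0 : ℝ)..T, 1 / M s ^ 4) ≤ π / (4 * B) * Real.log (1 + 4 * B / π * T) := by
  have hs : ∀ t ∈ Icc 0 T, Function.Surjective (φ t) := fun t ht => flow_surjective hF (hM t ht)
  set c := B / π with hc
  have hc0 : 0 < c := by positivity
  set I : ℝ → ℝ := fun t => ∫ s in (0 : ℝ)..t, 1 / M s ^ 4 with hI
  have hI' : ∀ t, HasDerivAt I (1 / M t ^ 4) t := fun t => by
    have hcont : Continuous fun s => 1 / M s ^ 4 :=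
      continuous_const.div (hMc.pow 4) fun s => (pow_pos (hM0 s) 4).ne'
    exact intervalIntegral.integral_hasDerivAt_right (hcont.intervalIntegrable _ _)
      (hcont.stronglyMeasurableAtFilter _ _) hcont.continuousAt
  have hI0 : I 0 = 0 := intervalIntegral.integral_same
  have hexp : ∀ k t, HasDerivAt (fun s => Real.exp (k * I s))
      (Real.exp (k * I t) * (k * (1 / M t ^ 4))) t := fun k t => ((hI' t).const_mul k).exp
  set p : ℝ → ℝ := fun s => fderiv ℝ (φ s) 0 (EuclideanSpace.single 0 1) 0 with hp
  have hp0 : p 0 = 1 := by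
    simp only [hp]
    rw [show φ 0 = id from funext hF.init_flow, fderiv_id]
    simp
  set a : ℝ → ℝ := fun t => 1 / π * ∫ y : Plane, ω t y * (y 0 * y 1) / ‖y‖ ^ 4 with ha
  have hp' : ∀ t ∈ Icc 0 T, HasDerivAt p (a t * p t) t := fun t ht =>
    hasDerivAt_stretch hF hgc hs hodd ht
  have hal : ∀ t ∈ Icc 0 T, c * (1 / M t ^ 4) ≤ a t := fun t ht => by
    have := strain_lower_bound hF hgc hs hodd hpos ht (hM0 t) (hM t ht)
    rw [← hB] at this
    calc c * (1 / M t ^ 4) = 1 / π * (1 / M t ^ 4 * B) := by rw [hc]; ring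
      _ ≤ a t := by simp only [ha]; gcongr
  have hgrow : ∀ t ∈ Icc 0 T, Real.exp (2 * c * I t) ≤ p t ^ 2 := by
    have hd : ∀ t ∈ Icc 0 T, HasDerivAt (fun s => p s ^ 2 * Real.exp (-(2 * c) * I s))
        (2 * (a t - c * (1 / M t ^ 4)) * p t ^ 2 * Real.exp (-(2 * c) * I t)) t := fun t ht => by
      refine (((hp' t ht).pow 2).mul (hexp (-(2 * c)) t)).congr_deriv ?_
      simp
      ring
    have hmono : MonotoneOn (fun s => p s ^ 2 * Real.exp (-(2 * c) * I s)) (Icc 0 T) := by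
      refine monotoneOn_of_deriv_nonneg (convex_Icc 0 T)
        (fun t ht => (hd t ht).continuousAt.continuousWithinAt)
        (fun t ht => (hd t (interior_subset ht)).differentiableAt.differentiableWithinAt)
        fun t ht => ?_
      rw [(hd t (interior_subset ht)).deriv]
      have := sub_nonneg.2 (hal t (interior_subset ht))
      positivity
    intro t ht
    have := hmono (left_mem_Icc.2 hT) ht ht.1
    simp only [hp0, hI0, mul_zero, Real.exp_zero, one_pow, mul_one] at this
    rw [neg_mul, Real.exp_neg, ← div_eq_mul_inv, le_div_iff₀ (Real.exp_pos _), one_mul] at this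
    exact this
  have hexpM : ∀ t ∈ Icc 0 T, Real.exp (4 * c * I t) ≤ M t ^ 4 := fun t ht => by
    have h1 : p t ^ 2 ≤ M t ^ 2 := sq_le_sq' (neg_le_of_abs_le (hM t ht 0 0 0))
      (le_of_abs_le (hM t ht 0 0 0))
    calc Real.exp (4 * c * I t) = Real.exp (2 * c * I t) ^ 2 := by
          rw [← Real.exp_nat_mul]; congr 1; push_cast; ring
      _ ≤ (M t ^ 2) ^ 2 := by
          have := (hgrow t ht).trans h1
          gcongr
      _ = M t ^ 4 := by ring
  have hlin : Real.exp (4 * c * I T) ≤ 1 + 4 * c * T := by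
    have hd : ∀ t, HasDerivAt (fun s => Real.exp (4 * c * I s) - 4 * c * s)
        (Real.exp (4 * c * I t) * (4 * c * (1 / M t ^ 4)) - 4 * c * 1) t := fun t =>
      (hexp (4 * c) t).sub ((hasDerivAt_id' t).const_mul (4 * c))
    have hanti : AntitoneOn (fun s => Real.exp (4 * c * I s) - 4 * c * s) (Icc 0 T) := by
      refine antitoneOn_of_deriv_nonpos (convex_Icc 0 T)
        (fun t _ => (hd t).continuousAt.continuousWithinAt)
        (fun t _ => (hd t).differentiableAt.differentiableWithinAt) fun t ht => ?_
      rw [(hd t).deriv]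
      have h4 : 0 < M t ^ 4 := pow_pos (hM0 t) 4
      have : Real.exp (4 * c * I t) * (4 * c * (1 / M t ^ 4)) ≤
          M t ^ 4 * (4 * c * (1 / M t ^ 4)) := by
        gcongr
        exact hexpM t (interior_subset ht)
      have h5 : M t ^ 4 * (4 * c * (1 / M t ^ 4)) = 4 * c * 1 := by
        rw [mul_left_comm, mul_one_div_cancel h4.ne']
      linarith
    have := hanti (left_mem_Icc.2 hT) (right_mem_Icc.2 hT) hT
    simp only [hI0, mul_zero, Real.exp_zero, sub_zero] at this
    linarith
  have hlog : 4 * c * I T ≤ Real.log (1 + 4 * c * T) := by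
    rw [Real.le_log_iff_exp_le (by positivity)]
    exact hlin
  have e1 : 4 * B / π = 4 * c := by rw [hc]; ring
  have e2 : π / (4 * B) = 1 / (4 * c) := by rw [hc]; field_simp
  rw [e1, e2, one_div_mul_eq_div, le_div_iff₀ (by positivity)]
  linarith

end

/-- Quantitative growth of the Lagrangian deformation for 2D Euler with
odd-odd, first-quadrant-nonnegative data: if
`B = ∫ g(x) x₁x₂/|x|⁴ dx > 0`, then any (continuous) pointwise bound `M(s)` on
the entries of `Dφ(s,·)` satisfies `∫₀ᵗ M(s)^{−4} ds ≤ (π/4B) log(1+(4B/π)t)`;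
in particular any uniform bound `M` on `[0,t]` satisfies
`M ≥ ((4B/π) t / log(1+(4B/π)t))^{1/4}`. -/
theorem large_lagrangian_deformation
    (g : EuclideanSpace ℝ (Fin 2) → ℝ)
    (ω : ℝ → EuclideanSpace ℝ (Fin 2) → ℝ)
    (φ : ℝ → EuclideanSpace ℝ (Fin 2) → EuclideanSpace ℝ (Fin 2)) (B : ℝ)
    (hg : ContDiff ℝ (⊤ : ℕ∞) g) (hgc : HasCompactSupport g)
    (hodd1 : ∀ x, g (refl1 x) = -g x)
    (hodd2 : ∀ x, g (refl2 x) = -g x)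
    (hpos : ∀ x : EuclideanSpace ℝ (Fin 2), 0 ≤ x 0 → 0 ≤ x 1 → 0 ≤ g x)
    (hB : B = ∫ x : EuclideanSpace ℝ (Fin 2), g x * (x 0 * x 1) / ‖x‖ ^ 4)
    (hBpos : 0 < B)
    (hω : ContDiff ℝ (⊤ : ℕ∞) (fun p : ℝ × EuclideanSpace ℝ (Fin 2) => ω p.1 p.2))
    (hω0 : ω 0 = g)
    (heuler : ∀ t x, HasDerivAt (fun s => ω s x)
        (-(fderiv ℝ (ω t) x (∫ y, ω t y • biotSavartK (x - y)))) t)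
    (hφ : ContDiff ℝ (⊤ : ℕ∞) (fun p : ℝ × EuclideanSpace ℝ (Fin 2) => φ p.1 p.2))
    (hφ0 : ∀ x, φ 0 x = x)
    (hode : ∀ t x, HasDerivAt (fun s => φ s x)
        (∫ y, ω t y • biotSavartK (φ t x - y)) t) :
    (∀ M : ℝ → ℝ, Continuous M →
      (∀ (s : ℝ) (x : EuclideanSpace ℝ (Fin 2)) (i j : Fin 2),
        |fderiv ℝ (φ s) x (EuclideanSpace.single j 1) i| ≤ M s) →
      ∀ t : ℝ, 0 ≤ t →
        (∫ s in (0:ℝ)..t, 1 / (M s) ^ 4)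
          ≤ π / (4 * B) * Real.log (1 + 4 * B / π * t)) ∧
    (∀ t : ℝ, 0 < t → ∀ M : ℝ,
      (∀ s ∈ Icc (0:ℝ) t, ∀ (x : EuclideanSpace ℝ (Fin 2)) (i j : Fin 2),
        |fderiv ℝ (φ s) x (EuclideanSpace.single j 1) i| ≤ M) →
      (4 * B / π * (t / Real.log (1 + 4 * B / π * t))) ^ (1/4 : ℝ) ≤ M) := by
  have hF : EulerFlow g ω φ := ⟨hω, hω0, heuler, hφ, hφ0, hode⟩
  have hodd : ∀ i x, g (reflIso i x) = -g x := by
    intro i x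
    fin_cases i
    · exact refl1_eq x ▸ hodd1 x
    · exact refl2_eq x ▸ hodd2 x
  refine ⟨fun M hMc hM t ht => ?_, fun t ht M hM => ?_⟩
  · exact integral_deformation_le hF hgc hodd hpos hB hBpos ht hMc
      (fun s => bound_pos hF (hM s)) fun s _ => hM s
  · have hM0 : 0 < M := bound_pos hF (hM 0 (left_mem_Icc.2 ht.le))
    have h := integral_deformation_le hF hgc hodd hpos hB hBpos ht.le
      (continuous_const (y := M)) (fun _ => hM0) hM
    rw [intervalIntegral.integral_const, sub_zero, smul_eq_mul] at h
    have hL : 0 < Real.log (1 + 4 * B / π * t) := by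
      have : 0 < 4 * B / π * t := by positivity
      exact Real.log_pos (by linarith)
    have h4 : 4 * B / π * (t / Real.log (1 + 4 * B / π * t)) ≤ M ^ 4 := by
      set L := Real.log (1 + 4 * B / π * t)
      rw [mul_one_div, div_le_iff₀ (by positivity)] at h
      rw [mul_div_assoc', div_le_iff₀ hL]
      calc 4 * B / π * t ≤ 4 * B / π * (π / (4 * B) * L * M ^ 4) := by gcongr
        _ = M ^ 4 * L := by field_simp
    calc (4 * B / π * (t / Real.log (1 + 4 * B / π * t))) ^ (1 / 4 : ℝ)
        ≤ (M ^ 4) ^ (1 / 4 : ℝ) := Real.rpow_le_rpow (by positivity) h4 (by norm_num)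
      _ = M := by
        rw [← Real.rpow_natCast, ← Real.rpow_mul hM0.le]
        norm_num

end
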